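/- arXiv:2503.08260 — 12 statements merged into one kernel-verified Lean document; each statement's English description precedes it below -/
import Mathlib

section
/- Let S be a partial spread of PG(3,q) of size q²+1−x, where 0 ≤ x ≤ q²+1. Every point of PG(3,q) that lies on a line of S lies on exactly x planes of PG(3,q) containing no line of S, and every hole of S lies on exactly q+x planes of PG(3,q) containing no line of S. -/
open scoped Classical

lemma planes_through (F : Type*) [Field F] [Fintype F] (U : Submodule F (Fin 4 → F)) (n : ℕ)
    (h : Module.finrank F U + n = 4) :
    {W : Submodule F (Fin 4 → F) | Module.finrank F W = 3 ∧ U ≤ W}.ncard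
      = ∑ i ∈ Finset.range n, Fintype.card F ^ i := by
  have hU : Module.finrank F U.dualAnnihilator = n := by
    have h1 := Subspace.finrank_add_finrank_dualAnnihilator_eq U
    rw [Module.finrank_fin_fun] at h1
    omega
  rw [← Nat.card_eq_fintype_card, ← Projectivization.card_of_finrank F U.dualAnnihilator hU,
    ← Nat.card_coe_set_eq]
  symm
  refine Nat.card_congr (Equiv.ofBijective (fun p => ⟨(p.submodule.map
    (Submodule.subtype _)).dualCoannihilator, ?_, ?_⟩) ⟨?_, ?_⟩)
  · have h1 := Subspace.finrank_add_finrank_dualCoannihilator_eq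
      (p.submodule.map (Submodule.subtype U.dualAnnihilator))
    rw [Submodule.finrank_map_subtype_eq, Projectivization.finrank_submodule,
      Module.finrank_fin_fun] at h1
    omega
  · rw [← Subspace.dualAnnihilator_le_dualAnnihilator_iff,
      Subspace.dualCoannihilator_dualAnnihilator_eq]
    exact Submodule.map_subtype_le _ _
  · intro p p' hpp
    have h1 := congrArg (fun W => W.1.dualAnnihilator) hpp
    simp only [Subspace.dualCoannihilator_dualAnnihilator_eq] at h1
    exact Projectivization.submodule_injective
      (Submodule.map_injective_of_injective (Submodule.subtype_injective _) h1)
  · rintro ⟨W, hW, hUW⟩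
    have hle : W.dualAnnihilator ≤ U.dualAnnihilator :=
      Subspace.dualAnnihilator_le_dualAnnihilator_iff.2 hUW
    have hm : (W.dualAnnihilator.comap (Submodule.subtype U.dualAnnihilator)).map
        (Submodule.subtype U.dualAnnihilator) = W.dualAnnihilator := by
      rw [Submodule.map_comap_subtype, inf_of_le_right hle]
    have h1 : Module.finrank F
        (W.dualAnnihilator.comap (Submodule.subtype U.dualAnnihilator)) = 1 := by
      rw [← Submodule.finrank_map_subtype_eq, hm]
      have h1 := Subspace.finrank_add_finrank_dualAnnihilator_eq W
      rw [Module.finrank_fin_fun] at h1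
      omega
    refine ⟨Projectivization.mk'' _ h1, ?_⟩
    apply Subtype.ext
    simp only [Projectivization.submodule_mk'', hm]
    exact Subspace.dualAnnihilator_dualCoannihilator_eq

/-- Each plane through `p` either contains no line of `S` or exactly one. -/
lemma count_split (F : Type*) [Field F] [Fintype F]
    (S : Finset (Submodule F (Fin 4 → F)))
    (hS_line : ∀ L ∈ S, Module.finrank F L = 2)
    (hS_disj : ∀ L ∈ S, ∀ L' ∈ S, L ≠ L' → L ⊓ L' = ⊥)
    (P : Submodule F (Fin 4 → F)) :
    {W : Submodule F (Fin 4 → F) | Module.finrank F W = 3 ∧ P ≤ W}.ncard =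
    {W : Submodule F (Fin 4 → F) |
        Module.finrank F W = 3 ∧ P ≤ W ∧ ∀ L ∈ S, ¬ L ≤ W}.ncard +
    ∑ L ∈ S, {W : Submodule F (Fin 4 → F) | Module.finrank F W = 3 ∧ P ⊔ L ≤ W}.ncard := by
  have : Fintype (Submodule F (Fin 4 → F)) := Fintype.ofFinite _
  simp only [Set.ncard_eq_toFinset_card', Set.toFinset_ofPred]
  rw [← Finset.card_biUnion, ← Finset.card_union_of_disjoint]
  · congr 1
    ext W
    simp only [Finset.mem_filter, Finset.mem_univ, true_and, Finset.mem_union, Finset.mem_biUnion,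
      sup_le_iff]
    by_cases h : ∃ L ∈ S, L ≤ W
    · obtain ⟨L, hL, hLW⟩ := h
      constructor
      · rintro ⟨a, b⟩
        exact Or.inr ⟨L, hL, a, b, hLW⟩
      · rintro (⟨a, b, c⟩ | ⟨L, hL, a, b, c⟩) <;> exact ⟨a, b⟩
    · push Not at h
      constructor
      · rintro ⟨a, b⟩
        exact Or.inl ⟨a, b, h⟩
      · rintro (⟨a, b, c⟩ | ⟨L, hL, a, b, c⟩) <;> exact ⟨a, b⟩
  · rw [Finset.disjoint_left]
    intro W h1 h2
    simp only [Finset.mem_filter, Finset.mem_univ, true_and, Finset.mem_biUnion,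
      sup_le_iff] at h1 h2
    obtain ⟨L, hL, a, b, c⟩ := h2
    exact h1.2.2 L hL c
  · intro L hL L' hL' hne
    rw [Function.onFun, Finset.disjoint_left]
    intro W h1 h2
    simp only [Finset.mem_filter, Finset.mem_univ, true_and, sup_le_iff] at h1 h2
    have h3 := Submodule.finrank_sup_add_finrank_inf_eq L L'
    rw [hS_disj L hL L' hL' hne, hS_line L hL, hS_line L' hL', finrank_bot] at h3
    have h4 := Submodule.finrank_mono (sup_le h1.2.2 h2.2.2)
    omega

lemma planes_off (F : Type*) [Field F] [Fintype F] (P L : Submodule F (Fin 4 → F))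
    (hP : Module.finrank F P = 1) (hL : Module.finrank F L = 2) (h : ¬ P ≤ L) :
    {W : Submodule F (Fin 4 → F) | Module.finrank F W = 3 ∧ P ⊔ L ≤ W}.ncard = 1 := by
  rw [planes_through F (P ⊔ L) 1]
  · simp
  · have h3 := Submodule.finrank_sup_add_finrank_inf_eq P L
    have h4 : Module.finrank F (P ⊓ L : Submodule F (Fin 4 → F)) < Module.finrank F P :=
      Submodule.finrank_lt_finrank_of_lt (inf_lt_left.2 h)
    omega

/-- Let S be a partial spread of PG(3,q) of size q²+1−x. Every point lying on a
line of S lies on exactly x planes containing no line of S, and every hole of S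
lies on exactly q+x planes containing no line of S. -/
theorem stmt_2 (F : Type*) [Field F] [Fintype F] (q : ℕ) (hq : q = Fintype.card F)
    (x : ℕ) (hx : x ≤ q ^ 2 + 1)
    (S : Set (Submodule F (Fin 4 → F)))
    (hS_line : ∀ L ∈ S, Module.finrank F L = 2)
    (hS_disj : ∀ L ∈ S, ∀ L' ∈ S, L ≠ L' → L ⊓ L' = ⊥)
    (hS_card : S.ncard = q ^ 2 + 1 - x) :
    (∀ p : Projectivization F (Fin 4 → F), (∃ L ∈ S, p.submodule ≤ L) →
      {W : Submodule F (Fin 4 → F) |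
        Module.finrank F W = 3 ∧ p.submodule ≤ W ∧ ∀ L ∈ S, ¬ L ≤ W}.ncard = x) ∧
    (∀ p : Projectivization F (Fin 4 → F), (∀ L ∈ S, ¬ p.submodule ≤ L) →
      {W : Submodule F (Fin 4 → F) |
        Module.finrank F W = 3 ∧ p.submodule ≤ W ∧ ∀ L ∈ S, ¬ L ≤ W}.ncard = q + x) := by
  have hfin : S.Finite := Set.toFinite S
  lift S to Finset (Submodule F (Fin 4 → F)) using hfin
  rw [Set.ncard_coe_finset] at hS_card
  simp only [Finset.mem_coe] at *
  constructor
  · rintro p ⟨L₀, hL₀, hp⟩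
    have h1 := count_split F S hS_line hS_disj p.submodule
    rw [planes_through F p.submodule 3 (by rw [Projectivization.finrank_submodule]),
      ← Finset.add_sum_erase S _ hL₀, sup_eq_right.2 hp,
      planes_through F L₀ 2 (by rw [hS_line L₀ hL₀])] at h1
    rw [Finset.sum_congr (s₁ := S.erase L₀) rfl (g := fun _ => 1)] at h1
    · rw [Finset.sum_const (s := S.erase L₀), Finset.card_erase_of_mem hL₀, ← hq] at h1
      have h0 : 0 < S.card := Finset.card_pos.2 ⟨L₀, hL₀⟩
      simp [Finset.sum_range_succ] at h1
      omega
    · intro L hL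
      rw [Finset.mem_erase] at hL
      refine planes_off F _ L p.finrank_submodule (hS_line L hL.2) fun hpL => ?_
      have h2 := le_inf hpL hp
      rw [hS_disj L hL.2 L₀ hL₀ hL.1] at h2
      have h3 := Submodule.finrank_mono h2
      rw [p.finrank_submodule, finrank_bot] at h3
      omega
  · intro p hp
    have h1 := count_split F S hS_line hS_disj p.submodule
    rw [planes_through F p.submodule 3 (by rw [Projectivization.finrank_submodule]),
      Finset.sum_congr (s₁ := S) rfl (g := fun _ => 1)] at h1
    · rw [← hq] at h1
      simp [Finset.sum_range_succ] at h1
      omega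
    · intro L hL
      exact planes_off F _ L p.finrank_submodule (hS_line L hL) (hp L hL)
end

section
/- Let S be a partial spread of PG(3,q) of size q²+1−x, where 0 ≤ x ≤ q²+1. Let P₀ be the set of holes of S and let P₂ be the set of planes of PG(3,q) containing no line of S. Then the pair (P₀, P₂) satisfies Property(x). -/
open scoped Classical

/-- Property(x) for a pair (P₀, P₂) of a set of points and a set of planes of PG(3,Q),
where `Q` is the field size. -/
def PropertyX (F : Type*) [Field F] (Q x : ℕ)
    (P0 : Set (Projectivization F (Fin 4 → F)))
    (P2 : Set (Submodule F (Fin 4 → F))) : Prop :=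
  -- (i) every plane contains exactly x or exactly Q+x points of P₀
  (∀ W : Submodule F (Fin 4 → F), Module.finrank F W = 3 →
      {p ∈ P0 | p.submodule ≤ W}.ncard = x ∨ {p ∈ P0 | p.submodule ≤ W}.ncard = Q + x) ∧
  -- (ii) P₂ is precisely the set of planes containing exactly Q+x points of P₀
  (∀ W : Submodule F (Fin 4 → F),
      W ∈ P2 ↔ Module.finrank F W = 3 ∧ {p ∈ P0 | p.submodule ≤ W}.ncard = Q + x) ∧
  -- (iii) every point lies on exactly x or exactly Q+x planes of P₂
  (∀ p : Projectivization F (Fin 4 → F),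
      {W ∈ P2 | p.submodule ≤ W}.ncard = x ∨ {W ∈ P2 | p.submodule ≤ W}.ncard = Q + x) ∧
  -- (iv) P₀ is precisely the set of points lying on exactly Q+x planes of P₂
  (∀ p : Projectivization F (Fin 4 → F),
      p ∈ P0 ↔ {W ∈ P2 | p.submodule ≤ W}.ncard = Q + x)

/-- Abstract counting lemma. -/
lemma count_aux {α β : Type*} [Finite α] [Finite β] (S : Set β) (A : Set α) (T : β → Set α)
    (P : β → Prop) (q x : ℕ) (hx : x ≤ q ^ 2 + 1) (hS : S.ncard = q ^ 2 + 1 - x)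
    (hA : A.ncard = q ^ 2 + q + 1) (hTA : ∀ L ∈ S, T L ⊆ A)
    (hd : ∀ L ∈ S, ∀ L' ∈ S, L ≠ L' → Disjoint (T L) (T L'))
    (h1 : ∀ L ∈ S, P L → (T L).ncard = q + 1)
    (h2 : ∀ L ∈ S, ¬ P L → (T L).ncard = 1)
    (hu : ∀ L ∈ S, ∀ L' ∈ S, P L → P L' → L = L') :
    ((∃ L ∈ S, P L) ∧ {a ∈ A | ∀ L ∈ S, a ∉ T L}.ncard = x) ∨
    ((∀ L ∈ S, ¬ P L) ∧ {a ∈ A | ∀ L ∈ S, a ∉ T L}.ncard = q + x) := by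
  have := Fintype.ofFinite α
  have := Fintype.ofFinite β
  have hU : (⋃ L ∈ S, T L).ncard = ∑ L ∈ S.toFinset, (T L).ncard := by
    have : (⋃ L ∈ S, T L) = ((S.toFinset.biUnion fun L => (T L).toFinset : Finset α) : Set α) := by
      ext a; simp
    rw [this, Set.ncard_coe_finset, Finset.card_biUnion]
    · simp [Set.ncard_eq_toFinset_card']
    · intro L hL L' hL' hne
      simp only [Function.onFun]
      rw [Set.disjoint_toFinset]
      exact hd L (by simpa using hL) L' (by simpa using hL') hne
  have hsub : (⋃ L ∈ S, T L) ⊆ A := by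
    intro a ha
    simp only [Set.mem_iUnion] at ha
    obtain ⟨L, hL, h⟩ := ha
    exact hTA L hL h
  have hdiff : {a ∈ A | ∀ L ∈ S, a ∉ T L} = A \ (⋃ L ∈ S, T L) := by
    ext a; simp
  have hcard := Set.ncard_sdiff_add_ncard_of_subset hsub
  rw [← hdiff, hU, hA] at hcard
  have hsum : ∑ L ∈ S.toFinset, (T L).ncard
      = S.ncard + q * (S.toFinset.filter P).card := by
    have : ∑ L ∈ S.toFinset, (T L).ncard = ∑ L ∈ S.toFinset, (1 + if P L then q else 0) := by
      refine Finset.sum_congr rfl fun L hL => ?_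
      have hL : L ∈ S := by simpa using hL
      by_cases h : P L
      · simp [h, h1 L hL h, add_comm]
      · simp [h, h2 L hL h]
    rw [this, Finset.sum_add_distrib, ← Finset.sum_filter]
    simp [Set.ncard_eq_toFinset_card', mul_comm]
  rw [hsum, hS] at hcard
  by_cases h : ∃ L ∈ S, P L
  · left
    refine ⟨h, ?_⟩
    obtain ⟨L, hL, hP⟩ := h
    have : S.toFinset.filter P = {L} := by
      ext M
      simp only [Finset.mem_filter, Set.mem_toFinset, Finset.mem_singleton]
      constructor
      · rintro ⟨hM, hPM⟩; exact hu M hM L hL hPM hP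
      · rintro rfl; exact ⟨hL, hP⟩
    rw [this, Finset.card_singleton] at hcard
    omega
  · right
    push Not at h
    refine ⟨h, ?_⟩
    have : S.toFinset.filter P = ∅ := by
      ext M
      simpa using h M
    rw [this, Finset.card_empty] at hcard
    omega

lemma card_points {F V : Type*} [Field F] [Fintype F] [AddCommGroup V] [Module F V]
    (W : Submodule F V) (n : ℕ) (hW : Module.finrank F W = n) :
    {p : Projectivization F V | p.submodule ≤ W}.ncard
      = ∑ i ∈ Finset.range n, Fintype.card F ^ i := by
  rw [← Nat.card_eq_fintype_card, ← Projectivization.card_of_finrank F W hW]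
  have hi : Function.Injective (Projectivization.map W.subtype W.injective_subtype) :=
    Projectivization.map_injective _ _
  rw [← Set.ncard_univ, ← Set.ncard_image_of_injective _ hi]
  congr 1
  ext p
  induction p using Projectivization.ind with | h v hv => ?_
  simp only [Set.mem_ofPred_eq, Projectivization.submodule_mk, Set.image_univ, Set.mem_range]
  rw [Submodule.span_singleton_le_iff_mem]
  constructor
  · intro h
    exact ⟨Projectivization.mk F ⟨v, h⟩ (by simpa using hv), by simp [Projectivization.map_mk]⟩
  · rintro ⟨p, hp⟩
    induction p using Projectivization.ind with | h w hw => ?_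
    rw [Projectivization.map_mk, Projectivization.mk_eq_mk_iff'] at hp
    obtain ⟨a, ha⟩ := hp
    by_cases h0 : a = 0
    · subst h0
      simp at ha
      exact absurd (Subtype.ext ha.symm) hw
    · have : v = a⁻¹ • (w : V) := by
        simp at ha
        rw [← ha, smul_smul, inv_mul_cancel₀ h0, one_smul]
      rw [this]
      exact W.smul_mem _ w.2

lemma card_planes {F V : Type*} [Field F] [Fintype F] [AddCommGroup V] [Module F V]
    [FiniteDimensional F V] (m n k : ℕ) (hV : Module.finrank F V = m + 1)
    (U : Submodule F V) (hU : Module.finrank F U = k) (hk : k + n = m + 1) :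
    {W : Submodule F V | Module.finrank F W = m ∧ U ≤ W}.ncard
      = ∑ i ∈ Finset.range n, Fintype.card F ^ i := by
  have hU' : Module.finrank F U.dualAnnihilator = n := by
    have := Subspace.finrank_add_finrank_dualAnnihilator_eq U
    omega
  rw [← card_points U.dualAnnihilator n hU']
  have hi : Function.Injective
      (fun p : Projectivization F (Module.Dual F V) => p.submodule.dualCoannihilator) := by
    intro p p' h
    apply Projectivization.submodule_injective
    have := congrArg Submodule.dualAnnihilator h
    simpa [Subspace.dualCoannihilator_dualAnnihilator_eq] using this
  rw [← Set.ncard_image_of_injective _ hi]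
  congr 1
  ext W
  simp only [Set.mem_ofPred_eq, Set.mem_image]
  constructor
  · rintro ⟨h1, h2⟩
    have h3 : Module.finrank F W.dualAnnihilator = 1 := by
      have := Subspace.finrank_add_finrank_dualAnnihilator_eq W
      omega
    refine ⟨Projectivization.mk'' W.dualAnnihilator h3, ?_, ?_⟩
    · rw [Projectivization.submodule_mk'']
      exact Submodule.dualAnnihilator_anti h2
    · rw [Projectivization.submodule_mk'']
      exact Subspace.dualAnnihilator_dualCoannihilator_eq
  · rintro ⟨p, hp, rfl⟩
    refine ⟨?_, ?_⟩
    · have := Subspace.finrank_add_finrank_dualCoannihilator_eq p.submodule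
      rw [Projectivization.finrank_submodule] at this
      omega
    · exact Submodule.le_dualAnnihilator_iff_le_dualCoannihilator.1 hp

/-- Let S be a partial spread of PG(3,q) of size q²+1−x. Then (holes of S,
planes containing no line of S) satisfies Property(x). -/
theorem stmt_3 (F : Type*) [Field F] [Fintype F] (q : ℕ) (hq : q = Fintype.card F)
    (x : ℕ) (hx : x ≤ q ^ 2 + 1)
    (S : Set (Submodule F (Fin 4 → F)))
    (hS_line : ∀ L ∈ S, Module.finrank F L = 2)
    (hS_disj : ∀ L ∈ S, ∀ L' ∈ S, L ≠ L' → L ⊓ L' = ⊥)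
    (hS_card : S.ncard = q ^ 2 + 1 - x) :
    PropertyX F q x
      {p : Projectivization F (Fin 4 → F) | ∀ L ∈ S, ¬ p.submodule ≤ L}
      {W : Submodule F (Fin 4 → F) | Module.finrank F W = 3 ∧ ∀ L ∈ S, ¬ L ≤ W} := by
  have hV : Module.finrank F (Fin 4 → F) = 3 + 1 := by simp
  have : Finite (Submodule F (Fin 4 → F)) :=
    Finite.of_injective (fun W => (W : Set (Fin 4 → F))) SetLike.coe_injective
  have : Finite (Projectivization F (Fin 4 → F)) :=
    Finite.of_injective _ Projectivization.submodule_injective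
  have hq0 : 0 < q := hq ▸ Fintype.card_pos
  have hsupinf := fun A B : Submodule F (Fin 4 → F) => Submodule.finrank_sup_add_finrank_inf_eq A B
  have hle4 := fun A : Submodule F (Fin 4 → F) => Submodule.finrank_le A
  rw [hV] at hle4
  -- points in planes
  have key1 : ∀ W : Submodule F (Fin 4 → F), Module.finrank F W = 3 →
      ((∃ L ∈ S, L ≤ W) ∧ {p ∈ {p : Projectivization F (Fin 4 → F) | ∀ L ∈ S, ¬ p.submodule ≤ L} |
          p.submodule ≤ W}.ncard = x) ∨
      ((∀ L ∈ S, ¬ L ≤ W) ∧ {p ∈ {p : Projectivization F (Fin 4 → F) | ∀ L ∈ S, ¬ p.submodule ≤ L} |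
          p.submodule ≤ W}.ncard = q + x) := by
    intro W hW
    have h := count_aux S {p : Projectivization F (Fin 4 → F) | p.submodule ≤ W}
      (fun L => {p | p.submodule ≤ L ⊓ W}) (fun L => L ≤ W) q x hx hS_card ?_ ?_ ?_ ?_ ?_ ?_
    · have he : {a ∈ {p : Projectivization F (Fin 4 → F) | p.submodule ≤ W} |
          ∀ L ∈ S, a ∉ {p : Projectivization F (Fin 4 → F) | p.submodule ≤ L ⊓ W}} =
          {p ∈ {p : Projectivization F (Fin 4 → F) | ∀ L ∈ S, ¬ p.submodule ≤ L} |
          p.submodule ≤ W} := by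
        ext p
        simp only [Set.mem_ofPred_eq, le_inf_iff]
        grind
      rw [he] at h
      exact h
    · rw [card_points W 3 hW, ← hq]
      simp [Finset.sum_range_succ]; ring
    · intro L _ p hp
      have hp : p.submodule ≤ L ⊓ W := hp
      exact le_trans hp inf_le_right
    · intro L hL L' hL' hne
      rw [Set.disjoint_left]
      intro p hp hp'
      have h1 : p.submodule ≤ L ⊓ L' :=
        le_inf (le_trans hp inf_le_left) (le_trans hp' inf_le_left)
      rw [hS_disj L hL L' hL' hne, le_bot_iff] at h1
      have h2 := p.finrank_submodule
      rw [h1] at h2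
      simp at h2
    · intro L hL hP
      rw [card_points _ 2 (by rw [inf_eq_left.2 hP]; exact hS_line L hL), ← hq]
      simp [Finset.sum_range_succ]; ring
    · intro L hL hP
      rw [card_points _ 1 ?_]
      · simp
      · have h1 := hsupinf L W
        have h2 := hle4 (L ⊔ W)
        have h3 : W < L ⊔ W := right_lt_sup.2 hP
        have h4 := Submodule.finrank_lt_finrank_of_lt h3
        have h5 := hS_line L hL
        omega
    · intro L hL L' hL' hP hP'
      by_contra hne
      have h1 := hsupinf L L'
      rw [hS_disj L hL L' hL' hne, hS_line L hL, hS_line L' hL', finrank_bot] at h1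
      have h2 := Submodule.finrank_mono (sup_le hP hP')
      omega
  have key2 : ∀ p : Projectivization F (Fin 4 → F),
      ((∃ L ∈ S, p.submodule ≤ L) ∧
        {W ∈ {W : Submodule F (Fin 4 → F) | Module.finrank F W = 3 ∧ ∀ L ∈ S, ¬ L ≤ W} |
          p.submodule ≤ W}.ncard = x) ∨
      ((∀ L ∈ S, ¬ p.submodule ≤ L) ∧
        {W ∈ {W : Submodule F (Fin 4 → F) | Module.finrank F W = 3 ∧ ∀ L ∈ S, ¬ L ≤ W} |
          p.submodule ≤ W}.ncard = q + x) := by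
    intro p
    have hp1 := p.finrank_submodule
    have h := count_aux S
      {W : Submodule F (Fin 4 → F) | Module.finrank F W = 3 ∧ p.submodule ≤ W}
      (fun L => {W | Module.finrank F W = 3 ∧ L ⊔ p.submodule ≤ W})
      (fun L => p.submodule ≤ L) q x hx hS_card ?_ ?_ ?_ ?_ ?_ ?_
    · have he : {a ∈ {W : Submodule F (Fin 4 → F) | Module.finrank F W = 3 ∧ p.submodule ≤ W} |
          ∀ L ∈ S, a ∉ {W : Submodule F (Fin 4 → F) |
            Module.finrank F W = 3 ∧ L ⊔ p.submodule ≤ W}} =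
          {W ∈ {W : Submodule F (Fin 4 → F) | Module.finrank F W = 3 ∧ ∀ L ∈ S, ¬ L ≤ W} |
          p.submodule ≤ W} := by
        ext W
        simp only [Set.mem_ofPred_eq, sup_le_iff]
        grind
      rw [he] at h
      exact h
    · rw [card_planes 3 3 1 hV p.submodule hp1 (by norm_num), ← hq]
      simp [Finset.sum_range_succ]; ring
    · intro L _ W hW
      exact ⟨hW.1, le_trans le_sup_right hW.2⟩
    · intro L hL L' hL' hne
      rw [Set.disjoint_left]
      intro W hW hW'
      have h1 := hsupinf L L'
      rw [hS_disj L hL L' hL' hne, hS_line L hL, hS_line L' hL', finrank_bot] at h1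
      have h2 := Submodule.finrank_mono
        (sup_le (le_trans le_sup_left hW.2) (le_trans le_sup_left hW'.2) : L ⊔ L' ≤ W)
      have h3 := hW.1
      omega
    · intro L hL hP
      rw [card_planes 3 2 2 hV _ (by rw [sup_eq_left.2 hP]; exact hS_line L hL) (by norm_num), ← hq]
      simp [Finset.sum_range_succ]; ring
    · intro L hL hP
      rw [card_planes 3 1 3 hV _ ?_ (by norm_num)]
      · simp
      · have h1 := hsupinf L p.submodule
        have h3 : L < L ⊔ p.submodule := left_lt_sup.2 hP
        have h4 := Submodule.finrank_lt_finrank_of_lt h3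
        have h5 := hS_line L hL
        omega
    · intro L hL L' hL' hP hP'
      by_contra hne
      have h1 : p.submodule ≤ L ⊓ L' := le_inf hP hP'
      rw [hS_disj L hL L' hL' hne, le_bot_iff] at h1
      rw [h1] at hp1
      simp at hp1
  refine ⟨?_, ?_, ?_, ?_⟩
  · intro W hW
    exact (key1 W hW).imp And.right And.right
  · intro W
    constructor
    · rintro ⟨hW, h⟩
      refine ⟨hW, ?_⟩
      rcases key1 W hW with ⟨⟨L, hL, hLW⟩, _⟩ | h'
      · exact absurd hLW (h L hL)
      · exact h'.2
    · rintro ⟨hW, h⟩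
      refine ⟨hW, ?_⟩
      rcases key1 W hW with h' | h'
      · have := h'.2
        omega
      · exact h'.1
  · intro p
    exact (key2 p).imp And.right And.right
  · intro p
    constructor
    · intro h
      rcases key2 p with ⟨⟨L, hL, hLW⟩, _⟩ | h'
      · exact absurd hLW (h L hL)
      · exact h'.2
    · intro h
      rcases key2 p with h' | h'
      · have := h'.2
        omega
      · exact h'.1
end

section
/- Let F ⊆ K be finite fields with K of degree 2 over F, and set q = |F| (so |K| = q²). Let B be the Baer subgeometry of PG(3,q²): the set of points of the projectivization of K⁴ admitting a nonzero representative vector all of whose coordinates lie in the image of F in K. Then every plane of PG(3,q²) contains exactly q+1 or exactly q²+q+1 points of B. -/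
open scoped Classical

/-- The Baer subgeometry of PG(3,|K|) determined by the subfield F of K: the set
of points of the projectivization of K⁴ admitting a nonzero representative
vector all of whose coordinates lie in the image of F in K. -/
def BaerSubgeometry (F K : Type*) [Field F] [Field K] [Algebra F K] :
    Set (Projectivization K (Fin 4 → K)) :=
  {p | ∃ (v : Fin 4 → K) (hv : v ≠ 0),
    (∀ i, v i ∈ Set.range (algebraMap F K)) ∧ p = Projectivization.mk K v hv}

/-- Coordinatewise embedding of F⁴ in K⁴, semilinear over F → K. -/
def baerEmb (F K : Type*) [Field F] [Field K] [Algebra F K] :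
    (Fin 4 → F) →ₛₗ[algebraMap F K] (Fin 4 → K) where
  toFun v := fun i => algebraMap F K (v i)
  map_add' u v := by ext i; simp
  map_smul' c v := by ext i; simp

theorem baerEmb_injective (F K : Type*) [Field F] [Field K] [Algebra F K] :
    Function.Injective (baerEmb F K) := by
  intro u v h
  ext i
  exact (algebraMap F K).injective (congrFun h i)

/-- The F-vectors lying in W. -/
def baerSub (F K : Type*) [Field F] [Field K] [Algebra F K]
    (W : Submodule K (Fin 4 → K)) : Submodule F (Fin 4 → F) :=
  W.comap (baerEmb F K)

theorem baerSub_le (F K : Type*) [Field F] [Field K] [Algebra F K]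
    (W : Submodule K (Fin 4 → K)) (hW : Module.finrank K W = 3) :
    Module.finrank F (baerSub F K W) ≤ 3 := by
  by_contra hlt
  have h4 : Module.finrank F (baerSub F K W) = Module.finrank F (Fin 4 → F) := by
    have := Submodule.finrank_le (baerSub F K W)
    simp at this ⊢
    omega
  have htop := Submodule.eq_top_of_finrank_eq h4
  have hWt : W = ⊤ := by
    rw [eq_top_iff]
    intro v _
    have hv : v = ∑ i, v i • baerEmb F K (Pi.single i 1) := by
      ext j
      simp [baerEmb, Finset.sum_apply, Pi.single_apply]
    rw [hv]
    refine Submodule.sum_mem _ fun i _ => W.smul_mem _ ?_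
    have : (Pi.single i 1 : Fin 4 → F) ∈ baerSub F K W := by rw [htop]; trivial
    exact this
  rw [hWt] at hW
  simp at hW

theorem le_baerSub (F K : Type*) [Field F] [Field K] [Finite K] [Algebra F K]
    (hdeg : Module.finrank F K = 2)
    (W : Submodule K (Fin 4 → K)) (hW : Module.finrank K W = 3) :
    2 ≤ Module.finrank F (baerSub F K W) := by
  let g : (Fin 4 → F) →ₗ[F] ((Fin 4 → K) ⧸ W) :=
    { toFun := fun v => W.mkQ (baerEmb F K v)
      map_add' := by intro u v; simp
      map_smul' := by
        intro c v
        rw [map_smulₛₗ, map_smul, algebraMap_smul]; rfl }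
  have hker : LinearMap.ker g = baerSub F K W := by
    ext v
    simp [g, baerSub]
  have h1 := LinearMap.finrank_range_add_finrank_ker g
  have hQ : Module.finrank K ((Fin 4 → K) ⧸ W) = 1 := by
    have := Submodule.finrank_quotient_add_finrank W
    simp at this
    omega
  have hQF : Module.finrank F ((Fin 4 → K) ⧸ W) = 2 := by
    rw [← Module.finrank_mul_finrank F K, hdeg, hQ]
  have : Module.Finite F ((Fin 4 → K) ⧸ W) := Module.finite_of_finrank_pos (by omega)
  have h2 := Submodule.finrank_le (LinearMap.range g)
  rw [hker] at h1
  simp at h1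
  omega

theorem baer_card (F K : Type*) [Field F] [Field K] [Algebra F K]
    (W : Submodule K (Fin 4 → K)) :
    {p ∈ BaerSubgeometry F K | p.submodule ≤ W}.ncard =
      Nat.card (Projectivization F (baerSub F K W)) := by
  let φ : baerSub F K W →ₛₗ[algebraMap F K] (Fin 4 → K) :=
    (baerEmb F K).comp (baerSub F K W).subtype
  have hφ : Function.Injective φ :=
    (baerEmb_injective F K).comp (baerSub F K W).injective_subtype
  have hinj : Function.Injective (Projectivization.map φ hφ) := by
    intro x y
    induction x with | h u hu =>
    induction y with | h v hv =>
    intro h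
    rw [Projectivization.map_mk, Projectivization.map_mk, Projectivization.mk_eq_mk_iff'] at h
    obtain ⟨a, ha⟩ := h
    rw [Projectivization.mk_eq_mk_iff']
    obtain ⟨i, hi⟩ : ∃ i, (v : Fin 4 → F) i ≠ 0 := by
      by_contra hc
      push Not at hc
      exact hv (Subtype.ext (funext hc))
    have hc : ∀ j, a * algebraMap F K ((v : Fin 4 → F) j) =
        algebraMap F K ((u : Fin 4 → F) j) := fun j => congrFun ha j
    have hi' : algebraMap F K ((v : Fin 4 → F) i) ≠ 0 := by simpa using hi
    refine ⟨(u : Fin 4 → F) i / (v : Fin 4 → F) i, ?_⟩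
    apply hφ
    rw [map_smulₛₗ, ← ha]
    congr 1
    rw [map_div₀, ← hc i]
    field_simp
  have hset : {p ∈ BaerSubgeometry F K | p.submodule ≤ W} =
      Set.range (Projectivization.map φ hφ) := by
    ext p
    constructor
    · rintro ⟨⟨v, hv, hF, rfl⟩, hle⟩
      choose u hu using hF
      have huv : baerEmb F K u = v := funext hu
      have hmem : u ∈ baerSub F K W := by
        change baerEmb F K u ∈ W
        rw [huv]
        apply hle
        rw [Projectivization.submodule_mk]
        exact Submodule.mem_span_singleton_self v
      have hu0 : (⟨u, hmem⟩ : baerSub F K W) ≠ 0 := by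
        intro h0
        apply hv
        have : u = 0 := congrArg Subtype.val h0
        rw [← huv, this, map_zero]
      refine ⟨Projectivization.mk F ⟨u, hmem⟩ hu0, ?_⟩
      rw [Projectivization.map_mk]
      congr 1
    · rintro ⟨x, rfl⟩
      induction x with | h u hu =>
      rw [Projectivization.map_mk]
      refine ⟨⟨_, _, fun i => ⟨(u : Fin 4 → F) i, rfl⟩, rfl⟩, ?_⟩
      rw [Projectivization.submodule_mk, Submodule.span_singleton_le_iff_mem]
      exact u.2
  rw [hset, ← Nat.card_coe_set_eq, Nat.card_range_of_injective hinj]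


/-- Every plane of PG(3,q²) contains exactly q+1 or exactly q²+q+1 points of the
Baer subgeometry PG(3,q). -/
theorem stmt_9 (F K : Type*) [Field F] [Field K] [Fintype F] [Fintype K]
    [Algebra F K] (hdeg : Module.finrank F K = 2)
    (q : ℕ) (hq : q = Fintype.card F)
    (W : Submodule K (Fin 4 → K)) (hW : Module.finrank K W = 3) :
    {p ∈ BaerSubgeometry F K | p.submodule ≤ W}.ncard = q + 1 ∨
    {p ∈ BaerSubgeometry F K | p.submodule ≤ W}.ncard = q ^ 2 + q + 1 := by


  have h1 := baerSub_le F K W hW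
  have h2 := le_baerSub F K hdeg W hW
  rw [baer_card]
  obtain h | h : Module.finrank F (baerSub F K W) = 2 ∨
      Module.finrank F (baerSub F K W) = 3 := by omega
  · left
    rw [Projectivization.card_of_finrank_two F _ h, hq, Nat.card_eq_fintype_card]
  · right
    rw [Projectivization.card_of_finrank F _ h, hq, Nat.card_eq_fintype_card]
    simp [Finset.sum_range_succ]
    ring
end

section
/- Let F ⊆ K be finite fields with K of degree 2 over F, set q = |F|, and let B be the Baer subgeometry of PG(3,q²) determined by F. Call a plane of PG(3,q²) a Baer plane if it contains exactly q²+q+1 points of B. Then every point of B lies on exactly q²+q+1 Baer planes, and every point of PG(3,q²) not in B lies on exactly q+1 Baer planes. -/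
open scoped Classical

open Module

/-- The plane with coordinate vector `v`. -/
noncomputable def bPlane {K : Type*} [Field K] (v : Fin 4 → K) : Submodule K (Fin 4 → K) :=
  LinearMap.ker (dotProductEquiv K (Fin 4) v)

theorem mem_bPlane {K : Type*} [Field K] (v w : Fin 4 → K) :
    w ∈ bPlane v ↔ v ⬝ᵥ w = 0 := by
  simp [bPlane]

theorem finrank_bPlane {K : Type*} [Field K] (v : Fin 4 → K) (hv : v ≠ 0) :
    finrank K (bPlane v) = 3 := by
  have h := Module.Dual.finrank_ker_add_one_of_ne_zero (K := K) (V₁ := Fin 4 → K)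
    (f := dotProductEquiv K (Fin 4) v) (by simpa using hv)
  simp at h
  exact h

theorem bPlane_surj {K : Type*} [Field K] (W : Submodule K (Fin 4 → K))
    (hW : finrank K W = 3) : ∃ v : Fin 4 → K, v ≠ 0 ∧ W = bPlane v := by
  have hlt : W < ⊤ := by
    rw [lt_top_iff_ne_top]
    rintro rfl
    simp at hW
  obtain ⟨f, hf, hle⟩ := Submodule.exists_le_ker_of_lt_top W hlt
  obtain ⟨v, rfl⟩ := (dotProductEquiv K (Fin 4)).surjective f
  have hv : v ≠ 0 := by rintro rfl; simp at hf
  exact ⟨v, hv, Submodule.eq_of_le_of_finrank_eq hle (hW.trans (finrank_bPlane v hv).symm)⟩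

theorem bPlane_inj {K : Type*} [Field K] (v w : Fin 4 → K) 
    (h : bPlane v = bPlane w) : ∃ a : K, a • w = v := by
  have h1 : dotProductEquiv K (Fin 4) v ∈
      Submodule.span K (Set.range (fun _ : Unit => dotProductEquiv K (Fin 4) w)) := by
    apply mem_span_of_iInf_ker_le_ker
    simp only [ciInf_unique]
    exact h.ge
  simp only [Set.range_const, Submodule.mem_span_singleton] at h1
  obtain ⟨a, ha⟩ := h1
  exact ⟨a, (dotProductEquiv K (Fin 4)).injective (by rw [map_smul, ha])⟩

theorem bSub_le {K : Type*} [Field K] (r p : Projectivization K (Fin 4 → K)) :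
    r.submodule ≤ bPlane p.rep ↔ p.rep ⬝ᵥ r.rep = 0 := by
  rw [Projectivization.submodule_eq, Submodule.span_singleton_le_iff_mem, mem_bPlane]

theorem mem_baer_iff (F : Type*) {K : Type*} [Field F] [Field K] [Algebra F K]
    (v : Fin 4 → K) (hv : v ≠ 0) :
    Projectivization.mk K v hv ∈ BaerSubgeometry F K ↔
      ∃ (c : K) (f : Fin 4 → F), ∀ i, v i = f i • c := by
  constructor
  · rintro ⟨w, hw, hr, h⟩
    rw [Projectivization.mk_eq_mk_iff'] at h
    obtain ⟨a, rfl⟩ := h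
    choose f hf using hr
    exact ⟨a, f, fun i => by simp [← hf, Algebra.smul_def, mul_comm]⟩
  · rintro ⟨c, f, h⟩
    have hvf : c • (fun i => algebraMap F K (f i)) = v := by
      ext i; simp [h, Algebra.smul_def, mul_comm]
    have h0 : (fun i => algebraMap F K (f i)) ≠ 0 := by
      intro h0
      rw [h0] at hvf
      exact hv (by simp [← hvf])
    exact ⟨_, h0, fun i => ⟨f i, rfl⟩, (Projectivization.mk_eq_mk_iff' _ _ _ _ _).2 ⟨c, hvf⟩⟩

/-- Rational vectors orthogonal to `v`. -/
noncomputable def bKer (F : Type*) {K : Type*} [Field F] [Field K] [Algebra F K]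
    (v : Fin 4 → K) : Submodule F (Fin 4 → F) :=
  LinearMap.ker (Fintype.linearCombination F v)

theorem finrank_bKer (F : Type*) {K : Type*} [Field F] [Field K] [Algebra F K]
    (hdeg : finrank F K = 2) (v : Fin 4 → K) (hv : v ≠ 0) :
    finrank F (bKer F v) =
      if Projectivization.mk K v hv ∈ BaerSubgeometry F K then 3 else 2 := by
  have : FiniteDimensional F K := FiniteDimensional.of_finrank_pos (by omega)
  have h := LinearMap.finrank_range_add_finrank_ker (Fintype.linearCombination F v)
  rw [Fintype.range_linearCombination] at h
  change _ + finrank F (bKer F v) = _ at h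
  simp only [finrank_fin_fun] at h
  obtain ⟨i, hi⟩ := Function.ne_iff.1 hv
  have hmem : ∀ j, v j ∈ Submodule.span F (Set.range v) := fun j =>
    Submodule.subset_span ⟨j, rfl⟩
  have hpos : finrank F (Submodule.span F (Set.range v)) ≠ 0 := by
    intro h0
    rw [Submodule.finrank_eq_zero] at h0
    have := hmem i
    rw [h0] at this
    exact hi (by simpa using this)
  have hle := Submodule.finrank_le (Submodule.span F (Set.range v))
  rw [mem_baer_iff]
  split_ifs with hB
  · obtain ⟨c, f, hcf⟩ := hB
    have h1 : Submodule.span F (Set.range v) ≤ Submodule.span F {c} := by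
      rw [Submodule.span_le]
      rintro _ ⟨j, rfl⟩
      exact Submodule.mem_span_singleton.2 ⟨f j, (hcf j).symm⟩
    have h2 := (Submodule.finrank_mono h1).trans (finrank_span_le_card ({c} : Set K))
    simp at h2
    omega
  · have hne : finrank F (Submodule.span F (Set.range v)) ≠ 1 := by
      intro h1
      obtain ⟨c, -, hc⟩ := finrank_eq_one_iff'.1 h1
      choose f hf using fun j => hc ⟨v j, hmem j⟩
      exact hB ⟨c, f, fun j => (congrArg Subtype.val (hf j)).symm⟩
    omega

/-- The inclusion of rational vectors. -/
noncomputable def bIncl (F : Type*) {K : Type*} [Field F] [Field K] [Algebra F K]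
    (v : Fin 4 → K) : bKer F v →ₛₗ[algebraMap F K] (Fin 4 → K) where
  toFun a := fun i => algebraMap F K (a.1 i)
  map_add' a b := by ext i; simp
  map_smul' c a := by ext i; simp

theorem bIncl_injective (F : Type*) {K : Type*} [Field F] [Field K] [Algebra F K]
    (v : Fin 4 → K) : Function.Injective (bIncl F v) := by
  intro a b h
  ext i
  exact (algebraMap F K).injective (congrFun h i)

theorem bMap_injective (F : Type*) {K : Type*} [Field F] [Field K] [Algebra F K]
    (v : Fin 4 → K) :
    Function.Injective (Projectivization.map (bIncl F v) (bIncl_injective F v)) := by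
  intro x y h
  induction x using Projectivization.ind with | h a ha =>
  induction y using Projectivization.ind with | h b hb =>
  rw [Projectivization.map_mk, Projectivization.map_mk, Projectivization.mk_eq_mk_iff'] at h
  obtain ⟨c, hc⟩ := h
  have hc' : ∀ i, c * algebraMap F K (b.1 i) = algebraMap F K (a.1 i) := fun i => congrFun hc i
  obtain ⟨i, hi⟩ : ∃ i, b.1 i ≠ 0 := by
    by_contra! h0
    exact hb (by ext i; simpa using h0 i)
  have hi' : algebraMap F K (b.1 i) ≠ 0 := by simpa using hi
  have hceq : c = algebraMap F K (a.1 i / b.1 i) := by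
    rw [map_div₀, eq_div_iff hi', hc']
  rw [Projectivization.mk_eq_mk_iff']
  refine ⟨a.1 i / b.1 i, ?_⟩
  ext j
  apply (algebraMap F K).injective
  rw [← hc' j, hceq]
  simp

theorem bRange (F : Type*) {K : Type*} [Field F] [Field K] [Algebra F K]
    (v : Fin 4 → K) :
    Set.range (Projectivization.map (bIncl F v) (bIncl_injective F v)) =
      {r ∈ BaerSubgeometry F K | r.submodule ≤ bPlane v} := by
  ext r
  constructor
  · rintro ⟨x, rfl⟩
    induction x using Projectivization.ind with | h a ha =>
    rw [Projectivization.map_mk]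
    refine ⟨⟨_, _, fun i => ⟨a.1 i, rfl⟩, rfl⟩, ?_⟩
    rw [Projectivization.submodule_mk, Submodule.span_singleton_le_iff_mem, mem_bPlane]
    have := a.2
    simp only [bKer, LinearMap.mem_ker, Fintype.linearCombination_apply] at this
    rw [← this]
    simp [dotProduct, bIncl, Algebra.smul_def, mul_comm]
  · rintro ⟨⟨w, hw, hr, rfl⟩, hle⟩
    choose f hf using hr
    rw [Projectivization.submodule_mk, Submodule.span_singleton_le_iff_mem, mem_bPlane] at hle
    have hmem : f ∈ bKer F v := by
      simp only [bKer, LinearMap.mem_ker, Fintype.linearCombination_apply]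
      rw [← hle]
      simp [dotProduct, hf, Algebra.smul_def, mul_comm]
    have hwf : bIncl F v ⟨f, hmem⟩ = w := funext hf
    have h0 : (⟨f, hmem⟩ : bKer F v) ≠ 0 := by
      intro h0
      rw [h0, map_zero] at hwf
      exact hw hwf.symm
    refine ⟨Projectivization.mk F ⟨f, hmem⟩ h0, ?_⟩
    rw [Projectivization.map_mk]
    congr 1

theorem bCount (F : Type*) {K : Type*} [Field F] [Field K] [Fintype F] [Algebra F K]
    (hdeg : finrank F K = 2) (v : Fin 4 → K) (hv : v ≠ 0) :
    {r ∈ BaerSubgeometry F K | r.submodule ≤ bPlane v}.ncard =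
      if Projectivization.mk K v hv ∈ BaerSubgeometry F K then
        Fintype.card F ^ 2 + Fintype.card F + 1 else Fintype.card F + 1 := by
  rw [← bRange, Set.ncard_range_of_injective (bMap_injective F v),
    Projectivization.card_of_finrank F _ (finrank_bKer F hdeg v hv)]
  split_ifs
  · simp [Finset.sum_range_succ]; ring
  · simp [Finset.sum_range_succ]; ring

theorem bMain (F K : Type*) [Field F] [Field K] [Fintype F]
    [Algebra F K] (hdeg : Module.finrank F K = 2)
    (p : Projectivization K (Fin 4 → K)) :
    {W : Submodule K (Fin 4 → K) | Module.finrank K W = 3 ∧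
        {r ∈ BaerSubgeometry F K | r.submodule ≤ W}.ncard
          = Fintype.card F ^ 2 + Fintype.card F + 1 ∧
        p.submodule ≤ W}.ncard = if p ∈ BaerSubgeometry F K then
        Fintype.card F ^ 2 + Fintype.card F + 1 else Fintype.card F + 1 := by
  have hc := bCount F hdeg p.rep p.rep_nonzero
  rw [Projectivization.mk_rep] at hc
  rw [← hc]
  have hinj : Function.Injective
      (fun r : Projectivization K (Fin 4 → K) => bPlane r.rep) := by
    intro r s h
    rw [← r.mk_rep, ← s.mk_rep, Projectivization.mk_eq_mk_iff']
    exact bPlane_inj _ _ h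
  rw [← Set.ncard_image_of_injective _ hinj]
  congr 1
  have hF : 0 < Fintype.card F := Fintype.card_pos
  ext W
  constructor
  · rintro ⟨h3, hB, hp⟩
    obtain ⟨v, hv, rfl⟩ := bPlane_surj W h3
    have hW : bPlane v = bPlane (Projectivization.mk K v hv).rep := by
      obtain ⟨a, ha⟩ := Projectivization.exists_smul_eq_mk_rep K v hv
      rw [← ha]
      ext w
      simp [mem_bPlane, Units.smul_def]
    rw [bCount F hdeg v hv] at hB
    refine ⟨Projectivization.mk K v hv, ⟨?_, ?_⟩, hW.symm⟩
    · by_contra hn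
      rw [if_neg hn] at hB
      have : 0 < Fintype.card F ^ 2 := by positivity
      omega
    · rw [hW, bSub_le] at hp
      rw [bSub_le, dotProduct_comm, hp]
  · rintro ⟨r, ⟨hr, hle⟩, rfl⟩
    refine ⟨finrank_bPlane _ r.rep_nonzero, ?_, ?_⟩
    · rw [bCount F hdeg _ r.rep_nonzero, Projectivization.mk_rep, if_pos hr]
    · rw [bSub_le] at hle ⊢
      rw [dotProduct_comm, hle]

/-- Call a plane of PG(3,q²) a Baer plane if it contains exactly q²+q+1 points
of the Baer subgeometry B. Every point of B lies on exactly q²+q+1 Baer planes,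
and every point not in B lies on exactly q+1 Baer planes. -/
theorem stmt_10 (F K : Type*) [Field F] [Field K] [Fintype F] [Fintype K]
    [Algebra F K] (hdeg : Module.finrank F K = 2)
    (q : ℕ) (hq : q = Fintype.card F)
    (p : Projectivization K (Fin 4 → K)) :
    (p ∈ BaerSubgeometry F K →
      {W : Submodule K (Fin 4 → K) | Module.finrank K W = 3 ∧
        {r ∈ BaerSubgeometry F K | r.submodule ≤ W}.ncard = q ^ 2 + q + 1 ∧
        p.submodule ≤ W}.ncard = q ^ 2 + q + 1) ∧
    (p ∉ BaerSubgeometry F K →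
      {W : Submodule K (Fin 4 → K) | Module.finrank K W = 3 ∧
        {r ∈ BaerSubgeometry F K | r.submodule ≤ W}.ncard = q ^ 2 + q + 1 ∧
        p.submodule ≤ W}.ncard = q + 1) := by
  subst hq
  rw [bMain F K hdeg p]
  exact ⟨fun h => if_pos h, fun h => if_neg h⟩
end

section
/- Let F ⊆ K be finite fields with K of degree 2 over F, set q = |F|, let B be the Baer subgeometry of PG(3,q²) determined by F, and let P₂ be the set of planes of PG(3,q²) containing exactly q²+q+1 points of B. Then the pair (B, P₂) satisfies Property(q+1) in PG(3,q²). -/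
open scoped Classical

namespace BaerAux

variable {F K : Type*} [Field F] [Field K] [Algebra F K]

/-- The plane with dual coordinates `a`. -/
noncomputable def H (a : Fin 4 → K) : Submodule K (Fin 4 → K) :=
  LinearMap.ker (dotProductEquiv K (Fin 4) a)

lemma mem_H (a v : Fin 4 → K) : v ∈ H a ↔ a ⬝ᵥ v = 0 := by
  simp [H]

lemma mk_le_H (a v : Fin 4 → K) (hv : v ≠ 0) :
    (Projectivization.mk K v hv).submodule ≤ H a ↔ a ⬝ᵥ v = 0 := by
  rw [Projectivization.submodule_mk, Submodule.span_singleton_le_iff_mem, mem_H]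

lemma finrank_H (a : Fin 4 → K) (ha : a ≠ 0) : Module.finrank K (H a) = 3 := by
  have h : dotProductEquiv K (Fin 4) a ≠ 0 := by simpa using ha
  have := Module.Dual.finrank_ker_add_one_of_ne_zero h
  simp at this
  exact this

lemma exists_H (W : Submodule K (Fin 4 → K)) (hW : Module.finrank K W = 3) :
    ∃ a : Fin 4 → K, a ≠ 0 ∧ W = H a := by
  have hlt : W < ⊤ := by
    rw [lt_top_iff_ne_top]
    rintro rfl
    simp at hW
  obtain ⟨f, hf, hle⟩ := W.exists_le_ker_of_lt_top hlt
  obtain ⟨a, rfl⟩ := (dotProductEquiv K (Fin 4)).surjective f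
  have ha : a ≠ 0 := by
    rintro rfl
    simp at hf
  refine ⟨a, ha, Submodule.eq_of_le_of_finrank_eq hle ?_⟩
  rw [hW]
  exact (finrank_H a ha).symm

lemma H_inj (a b : Fin 4 → K) (h : H a = H b) : ∃ c : K, c • a = b := by
  have h1 := mem_span_of_iInf_ker_le_ker
    (L := fun _ : Unit => (dotProductEquiv K (Fin 4) a : (Fin 4 → K) →ₗ[K] K))
    (K := dotProductEquiv K (Fin 4) b) (by simpa [H] using h.le)
  rw [Set.range_const, Submodule.mem_span_singleton] at h1
  obtain ⟨c, hc⟩ := h1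
  refine ⟨c, (dotProductEquiv K (Fin 4)).injective ?_⟩
  rw [map_smul, hc]

/-- Evaluation of `a` on F-vectors. -/
noncomputable def phi (F : Type*) {K : Type*} [Field F] [Field K] [Algebra F K]
    (a : Fin 4 → K) : (Fin 4 → F) →ₗ[F] K :=
  Fintype.linearCombination F a

lemma phi_apply (a : Fin 4 → K) (v : Fin 4 → F) :
    phi F a v = a ⬝ᵥ (fun i => algebraMap F K (v i)) := by
  simp [phi, Fintype.linearCombination_apply, dotProduct, Algebra.smul_def, mul_comm]

lemma phi_single (a : Fin 4 → K) (i : Fin 4) : phi F a (Pi.single i 1) = a i := by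
  simp [phi]

lemma ext_ne (v : Fin 4 → F) (hv : v ≠ 0) : (fun i => algebraMap F K (v i)) ≠ 0 := by
  contrapose! hv
  ext i
  simpa using congrFun hv i

/-- Projective points over F as projective points over K. -/
noncomputable def emb (a : Fin 4 → K) (p : Projectivization F (LinearMap.ker (phi F a))) :
    Projectivization K (Fin 4 → K) :=
  Projectivization.mk K (fun i => algebraMap F K ((p.rep : Fin 4 → F) i))
    (ext_ne _ (by simpa using p.rep_nonzero))

lemma emb_inj (a : Fin 4 → K) : Function.Injective (emb (F := F) a) := by
  intro p r h
  obtain ⟨c, hc⟩ := (Projectivization.mk_eq_mk_iff' _ _ _ _ _).1 h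
  rw [← p.mk_rep, ← r.mk_rep, Projectivization.mk_eq_mk_iff']
  have hr : (r.rep : Fin 4 → F) ≠ 0 := by simpa using r.rep_nonzero
  obtain ⟨i, hi⟩ := Function.ne_iff.1 hr
  have hi' : algebraMap F K ((r.rep : Fin 4 → F) i) ≠ 0 := by simpa using hi
  have hci : c = algebraMap F K ((p.rep : Fin 4 → F) i / (r.rep : Fin 4 → F) i) := by
    have := congrFun hc i
    simp only [Pi.smul_apply, smul_eq_mul] at this
    rw [map_div₀, eq_div_iff hi', this]
  refine ⟨(p.rep : Fin 4 → F) i / (r.rep : Fin 4 → F) i, ?_⟩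
  ext j
  apply (algebraMap F K).injective
  have := congrFun hc j
  simp only [Pi.smul_apply, smul_eq_mul] at this
  rw [← this, hci]
  simp

lemma emb_range (a : Fin 4 → K) :
    Set.range (emb (F := F) a) = {p ∈ BaerSubgeometry F K | p.submodule ≤ H a} := by
  ext p
  constructor
  · rintro ⟨p, rfl⟩
    refine ⟨⟨_, _, fun i => ⟨_, rfl⟩, rfl⟩, ?_⟩
    rw [emb, mk_le_H, ← phi_apply]
    exact p.rep.2
  · rintro ⟨⟨v, hv, hF, rfl⟩, hle⟩
    rw [mk_le_H] at hle
    choose w hw using hF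
    obtain rfl : (fun i => algebraMap F K (w i)) = v := funext hw
    rw [← phi_apply] at hle
    have hw0 : (⟨w, hle⟩ : LinearMap.ker (phi F a)) ≠ 0 := by
      intro h
      apply hv
      have : w = 0 := congrArg Subtype.val h
      ext i
      simp [this]
    refine ⟨Projectivization.mk F ⟨w, hle⟩ hw0, ?_⟩
    obtain ⟨c, hc⟩ := Projectivization.exists_smul_eq_mk_rep F _ hw0
    rw [emb, Projectivization.mk_eq_mk_iff']
    refine ⟨algebraMap F K c, ?_⟩
    rw [← hc]
    ext i
    simp [Units.smul_def]

lemma ncard_eq (a : Fin 4 → K) :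
    {p ∈ BaerSubgeometry F K | p.submodule ≤ H a}.ncard =
      Nat.card (Projectivization F (LinearMap.ker (phi F a))) := by
  rw [← emb_range, ← Set.image_univ, Set.ncard_image_of_injective _ (emb_inj a),
    Set.ncard_univ]

lemma baer_iff (a : Fin 4 → K) (ha : a ≠ 0) (hdeg : Module.finrank F K = 2) :
    Projectivization.mk K a ha ∈ BaerSubgeometry F K ↔
      Module.finrank F (LinearMap.range (phi F a)) = 1 := by
  have : FiniteDimensional F K := Module.finite_of_finrank_pos (by omega)
  constructor
  · rintro ⟨w, hw, hF, he⟩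
    obtain ⟨c, hc⟩ := (Projectivization.mk_eq_mk_iff' _ _ _ _ _).1 he
    choose u hu using hF
    obtain rfl : (fun i => algebraMap F K (u i)) = w := funext hu
    apply le_antisymm
    · have hle : LinearMap.range (phi F a) ≤ Submodule.span F {c} := by
        rintro _ ⟨v, rfl⟩
        rw [Submodule.mem_span_singleton]
        refine ⟨∑ i, u i * v i, ?_⟩
        rw [phi_apply, ← hc, Algebra.smul_def]
        simp only [dotProduct, Pi.smul_apply, smul_eq_mul, map_sum, map_mul, Finset.sum_mul]
        exact Finset.sum_congr rfl fun i _ => by ring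
      exact (Submodule.finrank_mono hle).trans ((finrank_span_le_card _).trans (by simp))
    · rw [Nat.one_le_iff_ne_zero, Ne, Submodule.finrank_eq_zero, LinearMap.range_eq_bot]
      intro h
      apply ha
      ext i
      rw [← phi_single (F := F) a i, h]
      simp
  · intro h
    obtain ⟨⟨c, hcm⟩, hc0, hc⟩ := finrank_eq_one_iff'.1 h
    have hx : ∀ i, ∃ x : F, x • c = a i := fun i => by
      obtain ⟨x, hx⟩ := hc ⟨a i, ⟨_, phi_single a i⟩⟩
      exact ⟨x, congrArg Subtype.val hx⟩
    choose x hx using hx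
    have hac : c • (fun i => algebraMap F K (x i)) = a := by
      ext i
      rw [← hx i, Algebra.smul_def (x i) c, mul_comm]
      rfl
    refine ⟨fun i => algebraMap F K (x i), ?_, fun i => ⟨_, rfl⟩, ?_⟩
    · intro h0
      rw [h0, smul_zero] at hac
      exact ha hac.symm
    · rw [Projectivization.mk_eq_mk_iff']
      exact ⟨c, hac⟩

lemma range_cases (a : Fin 4 → K) (ha : a ≠ 0) (hdeg : Module.finrank F K = 2) :
    Module.finrank F (LinearMap.range (phi F a)) = 1 ∨
    Module.finrank F (LinearMap.range (phi F a)) = 2 := by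
  have : FiniteDimensional F K := Module.finite_of_finrank_pos (by omega)
  have h1 := Submodule.finrank_le (LinearMap.range (phi F a))
  have h2 : Module.finrank F (LinearMap.range (phi F a)) ≠ 0 := by
    rw [Ne, Submodule.finrank_eq_zero, LinearMap.range_eq_bot]
    intro h
    apply ha
    ext i
    rw [← phi_single (F := F) a i, h]
    simp
  omega

/-- The main count. -/
lemma main_count [Fintype F] (hdeg : Module.finrank F K = 2) (a : Fin 4 → K) (ha : a ≠ 0) :
    (Projectivization.mk K a ha ∈ BaerSubgeometry F K ∧
      {p ∈ BaerSubgeometry F K | p.submodule ≤ H a}.ncard =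
        Fintype.card F ^ 2 + Fintype.card F + 1) ∨
    (Projectivization.mk K a ha ∉ BaerSubgeometry F K ∧
      {p ∈ BaerSubgeometry F K | p.submodule ≤ H a}.ncard = Fintype.card F + 1) := by
  rw [baer_iff a ha hdeg, ncard_eq]
  have h := LinearMap.finrank_range_add_finrank_ker (phi F a)
  rw [Module.finrank_fin_fun] at h
  rcases range_cases (F := F) a ha hdeg with h1 | h1
  · left
    refine ⟨h1, ?_⟩
    rw [Projectivization.card_of_finrank F _ (n := 3) (by omega)]
    simp [Finset.sum_range_succ]
    ring
  · right
    refine ⟨by omega, ?_⟩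
    rw [Projectivization.card_of_finrank F _ (n := 2) (by omega)]
    simp

lemma mem_iff [Fintype F] (hdeg : Module.finrank F K = 2) (a : Fin 4 → K) (ha : a ≠ 0) :
    {p ∈ BaerSubgeometry F K | p.submodule ≤ H a}.ncard =
        Fintype.card F ^ 2 + Fintype.card F + 1 ↔
    Projectivization.mk K a ha ∈ BaerSubgeometry F K := by
  have hpos : 0 < Fintype.card F ^ 2 := pow_pos Fintype.card_pos 2
  rcases main_count hdeg a ha with ⟨h1, h2⟩ | ⟨h1, h2⟩
  · simp [h1, h2]
  · simp only [h1, h2, iff_false]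
    omega

lemma dual_count [Fintype F] (hdeg : Module.finrank F K = 2) (v : Fin 4 → K) (hv : v ≠ 0) :
    {W ∈ {W : Submodule K (Fin 4 → K) | Module.finrank K W = 3 ∧
        {p ∈ BaerSubgeometry F K | p.submodule ≤ W}.ncard =
          Fintype.card F ^ 2 + Fintype.card F + 1} |
        (Projectivization.mk K v hv).submodule ≤ W}.ncard =
      {p ∈ BaerSubgeometry F K | p.submodule ≤ H v}.ncard := by
  have hinj : Function.Injective
      (fun r : Projectivization K (Fin 4 → K) => H r.rep) := by
    intro r s h
    obtain ⟨c, hc⟩ := H_inj _ _ h.symm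
    rw [← r.mk_rep, ← s.mk_rep, Projectivization.mk_eq_mk_iff']
    exact ⟨c, hc⟩
  rw [← Set.ncard_image_of_injective _ hinj]
  congr 1
  ext W
  constructor
  · rintro ⟨⟨h3, hc⟩, hle⟩
    obtain ⟨a, ha, rfl⟩ := exists_H W h3
    rw [mem_iff hdeg a ha] at hc
    rw [mk_le_H] at hle
    refine ⟨Projectivization.mk K a ha, ⟨hc, ?_⟩, ?_⟩
    · rw [mk_le_H, dotProduct_comm]
      exact hle
    · obtain ⟨c, hc⟩ := Projectivization.exists_smul_eq_mk_rep K a ha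
      show H (Projectivization.mk K a ha).rep = H a
      rw [← hc]
      ext x
      rw [mem_H, mem_H, Units.smul_def, smul_dotProduct]
      simp
  · rintro ⟨r, ⟨hr, hle⟩, rfl⟩
    rw [← r.mk_rep] at hr hle
    rw [mk_le_H] at hle
    refine ⟨⟨finrank_H _ r.rep_nonzero, (mem_iff hdeg _ r.rep_nonzero).2 hr⟩, ?_⟩
    rw [mk_le_H, dotProduct_comm]
    exact hle

end BaerAux

/-- The Baer subgeometry B of PG(3,q²), together with the set P₂ of planes
containing exactly q²+q+1 points of B, satisfies Property(q+1) in PG(3,q²)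
(whose field size is q²). -/
theorem stmt_11 (F K : Type*) [Field F] [Field K] [Fintype F] [Fintype K]
    [Algebra F K] (hdeg : Module.finrank F K = 2)
    (q : ℕ) (hq : q = Fintype.card F) :
    PropertyX K (q ^ 2) (q + 1)
      (BaerSubgeometry F K)
      {W : Submodule K (Fin 4 → K) | Module.finrank K W = 3 ∧
        {p ∈ BaerSubgeometry F K | p.submodule ≤ W}.ncard = q ^ 2 + q + 1} := by
  subst hq
  have hpos : 0 < Fintype.card F ^ 2 := pow_pos Fintype.card_pos 2
  refine ⟨?_, ?_, ?_, ?_⟩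
  · intro W hW
    obtain ⟨a, ha, rfl⟩ := BaerAux.exists_H W hW
    rcases BaerAux.main_count hdeg a ha with ⟨_, h⟩ | ⟨_, h⟩
    · right
      rw [h, add_assoc]
    · left
      exact h
  · intro W
    rw [← add_assoc]
    rfl
  · intro p
    induction p using Projectivization.ind with | h v hv =>
    rw [BaerAux.dual_count hdeg v hv]
    rcases BaerAux.main_count hdeg v hv with ⟨_, h⟩ | ⟨_, h⟩
    · right
      rw [h, add_assoc]
    · left
      exact h
  · intro p
    induction p using Projectivization.ind with | h v hv =>
    rw [BaerAux.dual_count hdeg v hv, ← add_assoc, BaerAux.mem_iff hdeg v hv]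
end

section
/- Let x be a natural number and let (P₀, P₂) be a pair consisting of a set of points and a set of planes of PG(3,q) satisfying Property(x). Then |P₀| = |P₂| = x(q+1). -/
open scoped Classical

lemma exists_polarity (F : Type*) [Field F] :
    ∃ O : Submodule F (Fin 4 → F) → Submodule F (Fin 4 → F),
      (∀ W, O (O W) = W) ∧ (∀ U W, U ≤ W → O W ≤ O U) ∧
      (∀ W, Module.finrank F (O W) = 4 - Module.finrank F W) := by
  let B : LinearMap.BilinForm F (Fin 4 → F) := dotProductBilin F F
  have hs : B.IsRefl := by
    intro u v h
    change dotProduct v u = 0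
    rw [dotProduct_comm]
    exact h
  have hB : B.Nondegenerate := by
    constructor
    · intro u h
      exact dotProduct_eq_zero u (fun v => h v)
    · intro u h
      exact dotProduct_eq_zero u (fun v => by rw [dotProduct_comm]; exact h v)
  refine ⟨B.orthogonal, ?_, ?_, ?_⟩
  · exact fun W => LinearMap.BilinForm.orthogonal_orthogonal hB hs W
  · exact fun U W h => LinearMap.BilinForm.orthogonal_le h
  · intro W
    rw [LinearMap.BilinForm.finrank_orthogonal hB]
    simp

lemma ncard_points_le {F : Type*} [Field F] [Fintype F] (W : Submodule F (Fin 4 → F)) :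
    {p : Projectivization F (Fin 4 → F) | p.submodule ≤ W}.ncard =
      ∑ i ∈ Finset.range (Module.finrank F W), Fintype.card F ^ i := by
  rw [← Nat.card_eq_fintype_card, ← Projectivization.card_of_finrank F W rfl,
    ← Set.ncard_univ, ← Set.ncard_image_of_injective _
      (Projectivization.map_injective W.subtype W.injective_subtype)]
  congr 1
  ext p
  simp only [Set.mem_setOf_eq, Set.image_univ, Set.mem_range]
  constructor
  · intro h
    have hr : p.rep ∈ W := h (by
      rw [Projectivization.submodule_eq]; exact Submodule.mem_span_singleton_self _)
    refine ⟨Projectivization.mk F ⟨p.rep, hr⟩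
      (fun h0 => p.rep_nonzero (congrArg Subtype.val h0)), ?_⟩
    rw [Projectivization.map_mk]
    exact p.mk_rep
  · rintro ⟨y, rfl⟩
    induction y using Projectivization.ind with
    | h v hv =>
      rw [Projectivization.map_mk, Projectivization.submodule_mk]
      exact (Submodule.span_singleton_le_iff_mem _ _).2 v.2

lemma ncard_planes_ge {F : Type*} [Field F] [Fintype F] (U : Submodule F (Fin 4 → F)) :
    {W : Submodule F (Fin 4 → F) | Module.finrank F W = 3 ∧ U ≤ W}.ncard =
      ∑ i ∈ Finset.range (4 - Module.finrank F U), Fintype.card F ^ i := by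
  obtain ⟨O, hO, hle, hr⟩ := exists_polarity F
  have hinj : Function.Injective O := fun a b h => by rw [← hO a, h, hO]
  rw [← hr, ← ncard_points_le, ← Set.ncard_image_of_injective _
    (hinj.comp (Projectivization.submodule_injective (K := F) (V := Fin 4 → F)))]
  congr 1
  ext W
  simp only [Set.mem_setOf_eq, Set.mem_image, Function.comp]
  constructor
  · rintro ⟨h3, hU⟩
    have h1 : Module.finrank F (O W) = 1 := by rw [hr, h3]
    refine ⟨Projectivization.mk'' (O W) h1, ?_, ?_⟩
    · rw [Projectivization.submodule_mk'']
      exact hle _ _ hU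
    · rw [Projectivization.submodule_mk'', hO]
  · rintro ⟨p, hp, rfl⟩
    refine ⟨by rw [hr, Projectivization.finrank_submodule], ?_⟩
    rw [← hO U]
    exact hle _ _ hp

lemma flag_count {α β : Type*} [Finite α] [Finite β] (r : α → β → Prop)
    (S : Set α) (T : Set β) :
    ∑ᶠ a ∈ S, {b ∈ T | r a b}.ncard = ∑ᶠ b ∈ T, {a ∈ S | r a b}.ncard := by
  have := Fintype.ofFinite α
  have := Fintype.ofFinite β
  rw [finsum_mem_eq_finite_toFinset_sum _ S.toFinite,
    finsum_mem_eq_finite_toFinset_sum _ T.toFinite]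
  have := Finset.sum_card_bipartiteAbove_eq_sum_card_bipartiteBelow r
    (s := S.toFinite.toFinset) (t := T.toFinite.toFinset)
  convert this using 2
  · rw [← Set.ncard_coe_finset]; congr 1; ext; simp [Finset.bipartiteAbove]
  · rw [← Set.ncard_coe_finset]; congr 1; ext; simp [Finset.bipartiteBelow]

lemma two_sum {α : Type*} [Finite α] (T P : Set α) (hP : P ⊆ T) (f : α → ℕ) (q x : ℕ)
    (h1 : ∀ a ∈ P, f a = q + x) (h2 : ∀ a ∈ T, a ∉ P → f a = x) :
    ∑ᶠ a ∈ T, f a = T.ncard * x + P.ncard * q := by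
  have := Fintype.ofFinite α
  rw [finsum_mem_eq_finite_toFinset_sum _ T.toFinite]
  have h : ∀ a ∈ T.toFinite.toFinset, f a = x + if a ∈ P then q else 0 := by
    intro a ha
    rw [Set.Finite.mem_toFinset] at ha
    split_ifs with hp
    · rw [h1 a hp, add_comm]
    · rw [h2 a ha hp, add_zero]
  rw [Finset.sum_congr rfl h, Finset.sum_add_distrib, Finset.sum_const, ← Finset.sum_filter,
    Finset.sum_const, smul_eq_mul, smul_eq_mul, Set.ncard_eq_toFinset_card T]
  congr 2
  rw [← Set.ncard_coe_finset]
  congr 1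
  ext a
  simpa using fun h => hP h

lemma const_sum {α : Type*} [Finite α] (P : Set α) (f : α → ℕ) (m : ℕ)
    (h1 : ∀ a ∈ P, f a = m) : ∑ᶠ a ∈ P, f a = P.ncard * m := by
  have := two_sum P ∅ (Set.empty_subset _) f 0 m (by simp) (fun a ha _ => h1 a ha)
  simpa using this

/-- If (P₀, P₂) satisfies Property(x) in PG(3,q), then |P₀| = |P₂| = x(q+1). -/
theorem stmt_12 (F : Type*) [Field F] [Fintype F] (q : ℕ) (hq : q = Fintype.card F)
    (x : ℕ)
    (P0 : Set (Projectivization F (Fin 4 → F)))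
    (P2 : Set (Submodule F (Fin 4 → F)))
    (hprop : PropertyX F q x P0 P2) :
    P0.ncard = x * (q + 1) ∧ P2.ncard = x * (q + 1) := by
  obtain ⟨h1, h2, h3, h4⟩ := hprop
  have fin2 : Finite (Submodule F (Fin 4 → F)) :=
    Finite.of_injective (fun W => (W : Set (Fin 4 → F))) SetLike.coe_injective
  set T : Set (Submodule F (Fin 4 → F)) := {W | Module.finrank F W = 3} with hT
  let r : Projectivization F (Fin 4 → F) → Submodule F (Fin 4 → F) → Prop :=
    fun p W => p.submodule ≤ W
  have hPT : P2 ⊆ T := fun W hW => ((h2 W).1 hW).1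
  have cT : T.ncard = 1 + q + q ^ 2 + q ^ 3 := by
    have := ncard_planes_ge (⊥ : Submodule F (Fin 4 → F))
    simpa [Finset.sum_range_succ, ← hq] using this
  have cU : (Set.univ : Set (Projectivization F (Fin 4 → F))).ncard
      = 1 + q + q ^ 2 + q ^ 3 := by
    have := ncard_points_le (⊤ : Submodule F (Fin 4 → F))
    simpa [Finset.sum_range_succ, ← hq] using this
  have e1 := flag_count r P0 T
  have e2 := flag_count r Set.univ P2
  rw [const_sum P0 _ (1 + q + q ^ 2), two_sum T P2 hPT _ q x, cT] at e1
  rw [const_sum P2 _ (1 + q + q ^ 2), two_sum Set.univ P0 (Set.subset_univ _) _ q x, cU] at e2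
  · have e : P0.ncard = P2.ncard := by
      zify at e1 e2 ⊢
      have : ((P0.ncard : ℤ) - P2.ncard) * (1 + 2 * q + q ^ 2) = 0 := by linarith
      rcases mul_eq_zero.1 this with h | h
      · linarith
      · have : (0 : ℤ) < 1 + 2 * q + q ^ 2 := by positivity
        linarith
    have e0 : P2.ncard = x * (q + 1) := by
      rw [e] at e1
      zify at e1 ⊢
      have : (1 + (q : ℤ) ^ 2) ≠ 0 := by positivity
      apply mul_left_cancel₀ this
      linarith
    exact ⟨e.trans e0, e0⟩
  · exact fun p hp => (h4 p).1 hp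
  · exact fun p _ hp => (h3 p).resolve_right (fun h => hp ((h4 p).2 h))
  · intro W hW
    have := ncard_points_le W
    rw [hPT hW] at this
    simpa [Finset.sum_range_succ, ← hq, r] using this
  · exact fun W hW => ((h2 W).1 hW).2
  · exact fun W hW hn => (h1 W hW).resolve_right (fun h => hn ((h2 W).2 ⟨hW, h⟩))
  · intro p _
    have := ncard_planes_ge p.submodule
    rw [Projectivization.finrank_submodule] at this
    simpa [Finset.sum_range_succ, ← hq, r, hT] using this
end

section
/- Let K be a finite field with |K| = Q, let m ≥ 1 be a natural number, and let P₀ be a set of points of PG(3,Q) with |P₀| = m(Q+1) such that every plane of PG(3,Q) contains exactly m or exactly m+Q points of P₀. Then the number of planes of PG(3,Q) containing exactly m+Q points of P₀ is exactly m(Q+1). -/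
open scoped Classical

lemma aux_ann (K : Type*) [Field K] [Fintype K]
    [Fintype (Module.Dual K (Fin 4 → K))] (U : Submodule K (Fin 4 → K)) (k : ℕ)
    (hk : Module.finrank K U + k = 4) :
    (Finset.univ.filter (fun f : Module.Dual K (Fin 4 → K) =>
      f ≠ 0 ∧ U ≤ LinearMap.ker f)).card + 1 = Fintype.card K ^ k := by
  have h1 : Module.finrank K U.dualAnnihilator = k := by
    have := Subspace.finrank_add_finrank_dualAnnihilator_eq U
    simp at this
    omega
  have h2 : Nat.card U.dualAnnihilator = Fintype.card K ^ k := by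
    rw [Module.natCard_eq_pow_finrank (K := K), h1, Nat.card_eq_fintype_card]
  rw [← h2]
  have h3 : (Finset.univ.filter (fun f : Module.Dual K (Fin 4 → K) => f ∈ U.dualAnnihilator)).card
      = Nat.card U.dualAnnihilator := by
    rw [Nat.card_eq_fintype_card, Fintype.card_subtype]
  rw [← h3]
  have h4 : (Finset.univ.filter (fun f : Module.Dual K (Fin 4 → K) =>
      f ≠ 0 ∧ U ≤ LinearMap.ker f)) =
      (Finset.univ.filter (fun f : Module.Dual K (Fin 4 → K) => f ∈ U.dualAnnihilator)).erase 0 := by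
    ext f
    simp only [Finset.mem_filter, Finset.mem_univ, true_and, Finset.mem_erase,
      Submodule.mem_dualAnnihilator]
    rfl
  rw [h4, Finset.card_erase_add_one]
  simp

lemma aux_ker (K : Type*) [Field K] (f : Module.Dual K (Fin 4 → K)) (hf : f ≠ 0) :
    Module.finrank K (LinearMap.ker f) = 3 := by
  have := Module.Dual.finrank_ker_add_one_of_ne_zero hf
  simp at this
  omega

/-- Let P₀ be a set of points of PG(3,Q) with |P₀| = m(Q+1), m ≥ 1, such that
every plane contains exactly m or exactly m+Q points of P₀. Then the number of
planes containing exactly m+Q points of P₀ is exactly m(Q+1). -/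
theorem stmt_13 (K : Type*) [Field K] [Fintype K] (Q : ℕ) (hQ : Q = Fintype.card K)
    (m : ℕ) (hm : 1 ≤ m)
    (P0 : Set (Projectivization K (Fin 4 → K)))
    (hcard : P0.ncard = m * (Q + 1))
    (hplanes : ∀ W : Submodule K (Fin 4 → K), Module.finrank K W = 3 →
      {p ∈ P0 | p.submodule ≤ W}.ncard = m ∨ {p ∈ P0 | p.submodule ≤ W}.ncard = m + Q) :
    {W : Submodule K (Fin 4 → K) | Module.finrank K W = 3 ∧
      {p ∈ P0 | p.submodule ≤ W}.ncard = m + Q}.ncard = m * (Q + 1) := by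
  have hQ1 : 1 < Q := hQ ▸ Fintype.one_lt_card
  have : Finite (Module.Dual K (Fin 4 → K)) := Module.finite_of_finite K
  let := Fintype.ofFinite (Module.Dual K (Fin 4 → K))
  let := Fintype.ofFinite (Submodule K (Fin 4 → K))
  let := Fintype.ofFinite (Projectivization K (Fin 4 → K))
  set S : Finset (Projectivization K (Fin 4 → K)) := P0.toFinset with hS
  set c : Submodule K (Fin 4 → K) → ℕ := fun W => {p ∈ P0 | p.submodule ≤ W}.ncard with hc
  have hcS : ∀ W, c W = (S.filter (fun p => p.submodule ≤ W)).card := by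
    intro W
    rw [hc, ← Set.ncard_coe_finset]
    simp [hS]
  have hScard : S.card = m * (Q + 1) := by
    rw [← hcard, ← Set.ncard_coe_finset]; simp [hS]
  set F : Finset (Module.Dual K (Fin 4 → K)) := Finset.univ.filter (fun f => f ≠ 0) with hF
  have hFcard : F.card + 1 = Q ^ 4 := by
    have := aux_ann K ⊥ 4 (by simp)
    simpa [hF, hQ] using this
  set T : Finset (Submodule K (Fin 4 → K)) :=
    Finset.univ.filter (fun W => Module.finrank K W = 3 ∧ c W = m + Q) with hT
  have hgoal : {W : Submodule K (Fin 4 → K) | Module.finrank K W = 3 ∧ c W = m + Q}.ncard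
      = T.card := by
    rw [← Set.ncard_coe_finset]; simp [hT]
  change {W : Submodule K (Fin 4 → K) | Module.finrank K W = 3 ∧ c W = m + Q}.ncard = _
  rw [hgoal]
  -- double count
  have hdc : ∑ f ∈ F, c (LinearMap.ker f) + S.card = S.card * Q ^ 3 := by
    have e1 : ∑ f ∈ F, c (LinearMap.ker f) =
        ∑ p ∈ S, (F.filter (fun f => p.submodule ≤ LinearMap.ker f)).card := by
      simp_rw [hcS]
      exact Finset.sum_card_bipartiteAbove_eq_sum_card_bipartiteBelow
        (fun (f : Module.Dual K (Fin 4 → K)) (p : Projectivization K (Fin 4 → K)) =>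
          p.submodule ≤ LinearMap.ker f)
    rw [e1, Finset.card_eq_sum_ones, ← Finset.sum_add_distrib, Finset.sum_mul]
    refine Finset.sum_congr rfl fun p _ => ?_
    have := aux_ann K p.submodule 3 (by rw [Projectivization.finrank_submodule])
    rw [hF, Finset.filter_filter, this, hQ, one_mul]
  have hH : (F.filter (fun f : Module.Dual K (Fin 4 → K) => c (LinearMap.ker f) = m + Q)).card + T.card = T.card * Q := by
    have e1 : (F.filter (fun f : Module.Dual K (Fin 4 → K) => c (LinearMap.ker f) = m + Q)).card =
        ∑ W ∈ T, ((F.filter (fun f : Module.Dual K (Fin 4 → K) => c (LinearMap.ker f) = m + Q)).filter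
          (fun f => LinearMap.ker f = W)).card := by
      apply Finset.card_eq_sum_card_fiberwise
      intro f hf
      simp only [hF, hT, Finset.coe_filter, Finset.mem_filter, Finset.mem_univ, true_and,
        Set.mem_ofPred_eq] at hf ⊢
      exact ⟨aux_ker K f hf.1, hf.2⟩
    rw [e1, Finset.card_eq_sum_ones, ← Finset.sum_add_distrib, Finset.sum_mul]
    refine Finset.sum_congr rfl fun W hW => ?_
    simp only [hT, Finset.mem_filter, Finset.mem_univ, true_and] at hW
    have := aux_ann K W 1 (by rw [hW.1])
    rw [pow_one, ← hQ] at this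
    rw [one_mul]
    refine Eq.trans ?_ this
    congr 2
    ext f
    simp only [hF, Finset.mem_filter, Finset.mem_univ, true_and]
    constructor
    · rintro ⟨⟨h0, _⟩, h2⟩
      exact ⟨h0, h2.ge⟩
    · rintro ⟨h0, h1⟩
      have : W = LinearMap.ker f :=
        Submodule.eq_of_le_of_finrank_eq h1 (by rw [hW.1, aux_ker K f h0])
      refine ⟨⟨h0, ?_⟩, this.symm⟩
      rw [← this, hW.2]
  have hsum : ∑ f ∈ F, c (LinearMap.ker f) =
      F.card * m + Q * (F.filter (fun f : Module.Dual K (Fin 4 → K) => c (LinearMap.ker f) = m + Q)).card := by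
    rw [Finset.card_filter (fun f : Module.Dual K (Fin 4 → K) => c (LinearMap.ker f) = m + Q) F, Finset.mul_sum, Finset.card_eq_sum_ones F, Finset.sum_mul,
      ← Finset.sum_add_distrib]
    refine Finset.sum_congr rfl fun f hf => ?_
    simp only [hF, Finset.mem_filter, Finset.mem_univ, true_and] at hf
    rcases hplanes _ (aux_ker K f hf) with h | h
    · have h' : c (LinearMap.ker f) = m := h
      rw [h', if_neg (by omega)]; simp
    · have h' : c (LinearMap.ker f) = m + Q := h
      rw [h', if_pos rfl]; simp
  generalize (F.filter (fun f : Module.Dual K (Fin 4 → K) => c (LinearMap.ker f) = m + Q)).card = H at *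
  rw [hsum, hScard] at hdc
  generalize F.card = N at *
  generalize T.card = t at *
  zify at *
  have hq : (Q : ℤ) * (Q - 1) ≠ 0 := mul_ne_zero (by omega) (by omega)
  apply mul_left_cancel₀ hq
  linear_combination hdc - (m : ℤ) * hFcard - (Q : ℤ) * hH
end

section
/- Let K be a finite field with |K| = Q, let m ≥ 1 be a natural number, and let P₀ be a set of points of PG(3,Q) with |P₀| = m(Q+1) such that every plane of PG(3,Q) contains exactly m or exactly m+Q points of P₀. Let P₂ be the set of planes of PG(3,Q) containing exactly m+Q points of P₀. Then the pair (P₀, P₂) satisfies Property(m) in PG(3,Q). -/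
open scoped Classical

lemma aux_count (K : Type*) [Field K] [Fintype K] (S : Submodule K (Fin 4 → K)) (d : ℕ)
    (hd : Module.finrank K S + d = 4) :
    {W : Submodule K (Fin 4 → K) | Module.finrank K W = 3 ∧ S ≤ W}.ncard * (Fintype.card K - 1)
      = Fintype.card K ^ d - 1 := by
  have : Finite (Module.Dual K (Fin 4 → K)) := Module.finite_of_finite K
  have := Fintype.ofFinite (Module.Dual K (Fin 4 → K))
  have := Fintype.ofFinite (Submodule K (Fin 4 → K))
  have key : ∀ (T : Submodule K (Fin 4 → K)) (e : ℕ), Module.finrank K T + e = 4 →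
      (Finset.univ.filter (fun f : Module.Dual K (Fin 4 → K) =>
        f ∈ T.dualAnnihilator ∧ f ≠ 0)).card = Fintype.card K ^ e - 1 := by
    intro T e he
    have h1 : Module.finrank K T.dualAnnihilator = e := by
      have := Subspace.finrank_add_finrank_dualAnnihilator_eq T
      simp at this
      omega
    have h2 := Module.card_eq_pow_finrank (K := K) (V := T.dualAnnihilator)
    rw [h1] at h2
    rw [← h2, Fintype.card_subtype]
    rw [← Finset.card_erase_of_mem (a := (0 : Module.Dual K (Fin 4 → K))) (by simp)]
    congr 1
    ext f
    simp [and_comm]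
  rw [← key S d hd]
  rw [Set.ncard_eq_toFinset_card']
  rw [Finset.card_eq_sum_card_fiberwise (f := fun f => LinearMap.ker f)
    (t := {W : Submodule K (Fin 4 → K) | Module.finrank K W = 3 ∧ S ≤ W}.toFinset)]
  · rw [Finset.sum_const_nat (m := Fintype.card K - 1)]
    intro W hW
    simp only [Set.mem_toFinset, Set.mem_setOf_eq] at hW
    have h3 := key W 1 (by omega)
    rw [pow_one] at h3
    rw [← h3]
    congr 1
    ext f
    simp only [Finset.mem_filter, Finset.mem_univ, true_and, Submodule.mem_dualAnnihilator]
    constructor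
    · rintro ⟨⟨h4, h5⟩, rfl⟩
      exact ⟨fun w hw => hw, h5⟩
    · rintro ⟨h4, h5⟩
      refine ⟨⟨fun w hw => h4 w (hW.2 hw), h5⟩, ?_⟩
      symm
      apply Submodule.eq_of_le_of_finrank_eq (fun w hw => h4 w hw)
      have := Module.Dual.finrank_ker_add_one_of_ne_zero h5
      simp at this
      omega
  · intro f hf
    simp only [Finset.coe_filter, Finset.mem_univ, true_and, Set.mem_setOf_eq,
      Submodule.mem_dualAnnihilator] at hf
    simp only [Set.coe_toFinset, Set.mem_setOf_eq]
    refine ⟨?_, fun w hw => hf.1 w hw⟩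
    have := Module.Dual.finrank_ker_add_one_of_ne_zero hf.2
    simp at this
    omega

lemma aux_sup (K : Type*) [Field K] (p q : Projectivization K (Fin 4 → K)) (h : p ≠ q) :
    Module.finrank K (p.submodule ⊔ q.submodule : Submodule K (Fin 4 → K)) = 2 := by
  have h1 := Submodule.finrank_sup_add_finrank_inf_eq p.submodule q.submodule
  rw [p.finrank_submodule, q.finrank_submodule] at h1
  have h2 : p.submodule ⊓ q.submodule < p.submodule := by
    refine lt_of_le_of_ne inf_le_left fun h3 => h ?_
    apply Projectivization.submodule_injective
    apply Submodule.eq_of_le_of_finrank_eq (inf_eq_left.1 h3)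
    rw [p.finrank_submodule, q.finrank_submodule]
  have h3 := Submodule.finrank_lt_finrank_of_lt h2
  rw [p.finrank_submodule] at h3
  omega

lemma aux_main (K : Type*) [Field K] [Fintype K] (Q : ℕ) (hQ : Q = Fintype.card K)
    (m : ℕ)
    (P0 : Set (Projectivization K (Fin 4 → K)))
    (hcard : P0.ncard = m * (Q + 1))
    (hplanes : ∀ W : Submodule K (Fin 4 → K), Module.finrank K W = 3 →
      {p ∈ P0 | p.submodule ≤ W}.ncard = m ∨ {p ∈ P0 | p.submodule ≤ W}.ncard = m + Q)
    (p : Projectivization K (Fin 4 → K)) :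
    {W ∈ {W : Submodule K (Fin 4 → K) | Module.finrank K W = 3 ∧
        {p ∈ P0 | p.submodule ≤ W}.ncard = m + Q} | p.submodule ≤ W}.ncard
      = if p ∈ P0 then Q + m else m := by
  have hQ2 : 2 ≤ Q := hQ ▸ Fintype.one_lt_card
  have := Fintype.ofFinite (Submodule K (Fin 4 → K))
  have := Fintype.ofFinite (Projectivization K (Fin 4 → K))
  have c1 : {W : Submodule K (Fin 4 → K) | Module.finrank K W = 3 ∧ p.submodule ≤ W}.ncard
      = Q ^ 2 + Q + 1 := by
    have := aux_count K p.submodule 3 (by rw [p.finrank_submodule])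
    rw [← hQ] at this
    obtain ⟨n, rfl⟩ : ∃ n, Q = n + 2 := ⟨Q - 2, by omega⟩
    apply Nat.eq_of_mul_eq_mul_right (show 0 < n + 2 - 1 by omega)
    rw [this]
    apply Nat.sub_eq_of_eq_add
    simp only [Nat.add_succ_sub_one]
    ring
  have c2 : ∀ q, q ≠ p → {W : Submodule K (Fin 4 → K) |
      Module.finrank K W = 3 ∧ p.submodule ⊔ q.submodule ≤ W}.ncard = Q + 1 := by
    intro q hq
    have := aux_count K (p.submodule ⊔ q.submodule) 2 (by rw [aux_sup K p q hq.symm])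
    rw [← hQ] at this
    obtain ⟨n, rfl⟩ : ∃ n, Q = n + 2 := ⟨Q - 2, by omega⟩
    apply Nat.eq_of_mul_eq_mul_right (show 0 < n + 2 - 1 by omega)
    rw [this]
    apply Nat.sub_eq_of_eq_add
    simp only [Nat.add_succ_sub_one]
    ring
  set A : Finset (Submodule K (Fin 4 → K)) :=
    Finset.univ.filter (fun W => Module.finrank K W = 3 ∧ p.submodule ≤ W) with hA
  have hAc : A.card = Q ^ 2 + Q + 1 := by
    rw [← c1, Set.ncard_eq_toFinset_card']
    congr 1
    ext W
    simp [hA]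
  have hPc : P0.toFinset.card = m * (Q + 1) := by
    rw [← hcard, Set.ncard_eq_toFinset_card']
  have dc := Finset.sum_card_bipartiteAbove_eq_sum_card_bipartiteBelow
    (s := A) (t := P0.toFinset) (fun W q => q.submodule ≤ W)
  set b := (A.filter (fun W => {p ∈ P0 | p.submodule ≤ W}.ncard = m + Q)).card with hb
  have goalb : {W ∈ {W : Submodule K (Fin 4 → K) | Module.finrank K W = 3 ∧
        {p ∈ P0 | p.submodule ≤ W}.ncard = m + Q} | p.submodule ≤ W}.ncard = b := by
    rw [hb, Set.ncard_eq_toFinset_card']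
    congr 1
    ext W
    simp [hA]
    tauto
  rw [goalb]
  have l1 : ∑ W ∈ A, (Finset.bipartiteAbove (fun W q => q.submodule ≤ W) P0.toFinset W).card
      = (Q ^ 2 + Q + 1) * m + b * Q := by
    have : ∀ W ∈ A, (Finset.bipartiteAbove (fun W q => q.submodule ≤ W) P0.toFinset W).card
        = m + if {p ∈ P0 | p.submodule ≤ W}.ncard = m + Q then Q else 0 := by
      intro W hW
      have e : (Finset.bipartiteAbove (fun W q => q.submodule ≤ W) P0.toFinset W).card
          = {p ∈ P0 | p.submodule ≤ W}.ncard := by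
        rw [Set.ncard_eq_toFinset_card']
        congr 1
        ext q
        simp [Finset.bipartiteAbove]
      rw [e]
      have hW3 : Module.finrank K W = 3 := by
        simp [hA] at hW
        exact hW.1
      rcases hplanes W hW3 with h | h
      · rw [h, if_neg (by omega)]
        rfl
      · rw [if_pos h, h]
    rw [Finset.sum_congr rfl this, Finset.sum_add_distrib, Finset.sum_const, hAc,
      ← Finset.sum_filter, Finset.sum_const, smul_eq_mul, smul_eq_mul]
  have l2 : ∑ q ∈ P0.toFinset, (Finset.bipartiteBelow (fun W q => q.submodule ≤ W) A q).card
      = m * (Q + 1) * (Q + 1) + if p ∈ P0 then Q ^ 2 else 0 := by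
    have : ∀ q ∈ P0.toFinset, (Finset.bipartiteBelow (fun W q => q.submodule ≤ W) A q).card
        = (Q + 1) + if p = q then Q ^ 2 else 0 := by
      intro q _
      by_cases h : p = q
      · subst h
        rw [if_pos rfl, Finset.bipartiteBelow, Finset.filter_true_of_mem, hAc]
        · ring
        · intro W hW
          simp [hA] at hW
          exact hW.2
      · rw [if_neg h, add_zero, ← c2 q (Ne.symm h), Set.ncard_eq_toFinset_card']
        congr 1
        ext W
        simp [Finset.bipartiteBelow, hA, and_assoc]
    rw [Finset.sum_congr rfl this, Finset.sum_add_distrib, Finset.sum_const, hPc,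
      Finset.sum_ite_eq, smul_eq_mul]
    simp
  rw [l1, l2] at dc
  apply Nat.eq_of_mul_eq_mul_right (show 0 < Q by omega)
  split_ifs at dc ⊢ <;> nlinarith

/-- Let P₀ be a set of points of PG(3,Q) with |P₀| = m(Q+1), m ≥ 1, such that
every plane contains exactly m or exactly m+Q points of P₀, and let P₂ be the
set of planes containing exactly m+Q points of P₀. Then (P₀, P₂) satisfies
Property(m) in PG(3,Q). -/
theorem stmt_15 (K : Type*) [Field K] [Fintype K] (Q : ℕ) (hQ : Q = Fintype.card K)
    (m : ℕ) (hm : 1 ≤ m)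
    (P0 : Set (Projectivization K (Fin 4 → K)))
    (hcard : P0.ncard = m * (Q + 1))
    (hplanes : ∀ W : Submodule K (Fin 4 → K), Module.finrank K W = 3 →
      {p ∈ P0 | p.submodule ≤ W}.ncard = m ∨ {p ∈ P0 | p.submodule ≤ W}.ncard = m + Q) :
    PropertyX K Q m P0
      {W : Submodule K (Fin 4 → K) | Module.finrank K W = 3 ∧
        {p ∈ P0 | p.submodule ≤ W}.ncard = m + Q} := by
  have main := aux_main K Q hQ m P0 hcard hplanes
  have hQ2 : 2 ≤ Q := hQ ▸ Fintype.one_lt_card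
  refine ⟨?_, ?_, ?_, ?_⟩
  · intro W hW
    rw [add_comm Q m]
    exact hplanes W hW
  · intro W
    rw [add_comm Q m]
    rfl
  · intro p
    rw [main p]
    split_ifs
    · right; rfl
    · left; rfl
  · intro p
    rw [main p]
    split_ifs with h
    · simp [h]
    · simp only [h, false_iff]
      omega
end

section
/- Let x be a natural number and let (P₀, P₂) satisfy Property(x) in PG(3,q). If ℓ is a line of PG(3,q) such that the number of planes of P₂ containing ℓ is strictly greater than x, then every point of ℓ belongs to P₀. -/
open scoped Classical

/-- If (P₀, P₂) satisfies Property(x) in PG(3,q) and ℓ is a line lying on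
strictly more than x planes of P₂, then every point of ℓ belongs to P₀. -/
theorem stmt_16 (F : Type*) [Field F] [Fintype F] (q : ℕ) (hq : q = Fintype.card F)
    (x : ℕ)
    (P0 : Set (Projectivization F (Fin 4 → F)))
    (P2 : Set (Submodule F (Fin 4 → F)))
    (hprop : PropertyX F q x P0 P2)
    (ℓ : Submodule F (Fin 4 → F)) (hℓ : Module.finrank F ℓ = 2)
    (hcount : x < {W ∈ P2 | ℓ ≤ W}.ncard) :
    ∀ p : Projectivization F (Fin 4 → F), p.submodule ≤ ℓ → p ∈ P0 := by
  intro p hp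
  obtain ⟨-, -, h3, h4⟩ := hprop
  rw [h4 p]
  have hfin : Finite (Submodule F (Fin 4 → F)) :=
    Finite.of_injective (fun W => (W : Set (Fin 4 → F))) SetLike.coe_injective
  have hle : {W ∈ P2 | ℓ ≤ W}.ncard ≤ {W ∈ P2 | p.submodule ≤ W}.ncard :=
    Set.ncard_le_ncard (fun W hW => ⟨hW.1, hp.trans hW.2⟩) (Set.toFinite _)
  rcases h3 p with h | h
  · omega
  · exact h
end

section
/- Let x be a natural number with x ≤ q, and let (P₀, P₂) satisfy Property(x) in PG(3,q). If ℓ is a line of PG(3,q) all of whose points belong to P₀, then every plane of PG(3,q) containing ℓ belongs to P₂. -/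
open scoped Classical

/-- Let x ≤ q and let (P₀, P₂) satisfy Property(x) in PG(3,q). If ℓ is a line
all of whose points belong to P₀, then every plane containing ℓ belongs to P₂. -/
theorem stmt_17 (F : Type*) [Field F] [Fintype F] (q : ℕ) (hq : q = Fintype.card F)
    (x : ℕ) (hx : x ≤ q)
    (P0 : Set (Projectivization F (Fin 4 → F)))
    (P2 : Set (Submodule F (Fin 4 → F)))
    (hprop : PropertyX F q x P0 P2)
    (ℓ : Submodule F (Fin 4 → F)) (hℓ : Module.finrank F ℓ = 2)
    (hpts : ∀ p : Projectivization F (Fin 4 → F), p.submodule ≤ ℓ → p ∈ P0) :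
    ∀ W : Submodule F (Fin 4 → F), Module.finrank F W = 3 → ℓ ≤ W → W ∈ P2 := by
  intro W hW hle
  obtain ⟨h1, h2, -, -⟩ := hprop
  refine (h2 W).2 ⟨hW, ?_⟩
  refine (h1 W hW).resolve_left ?_
  intro hc
  have hfin : Finite (Projectivization F (Fin 4 → F)) := inferInstance
  have hcard : Nat.card (Projectivization F ℓ) = Nat.card F + 1 :=
    Projectivization.card_of_finrank_two F ℓ hℓ
  have hinj := Projectivization.map_injective ℓ.subtype ℓ.injective_subtype
  have hsub : Set.range (Projectivization.map ℓ.subtype ℓ.injective_subtype) ⊆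
      {p ∈ P0 | p.submodule ≤ W} := by
    rintro _ ⟨p, rfl⟩
    have hp : (Projectivization.map ℓ.subtype ℓ.injective_subtype p).submodule ≤ ℓ := by
      induction p using Projectivization.ind with
      | h v hv =>
        rw [Projectivization.map_mk, Projectivization.submodule_mk,
          Submodule.span_singleton_le_iff_mem]
        exact v.2
    exact ⟨hpts _ hp, hp.trans hle⟩
  have hle2 := Set.ncard_le_ncard hsub (Set.toFinite _)
  rw [← Set.image_univ, Set.ncard_image_of_injective _ hinj, Set.ncard_univ, hcard, hc,
    Nat.card_eq_fintype_card] at hle2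
  omega
end

section
/- Let x ≥ 1 be a natural number and let (P₀, P₂) satisfy Property(x) in PG(3,q). Suppose ℓ is a line of PG(3,q) such that every point of ℓ belongs to P₀ and every plane containing ℓ belongs to P₂. Then the pair (P₀ minus the points of ℓ, P₂ minus the planes containing ℓ) satisfies Property(x−1) in PG(3,q). -/
open scoped Classical

theorem points_ncard {F V : Type*} [Field F] [Finite F] [AddCommGroup V] [Module F V]
    (U : Submodule F V) (n : ℕ) (h : Module.finrank F U = n) :
    {p : Projectivization F V | p.submodule ≤ U}.ncard
      = ∑ i ∈ Finset.range n, Nat.card F ^ i := by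
  rw [← Projectivization.card_of_finrank F U h]
  have hi := Projectivization.map_injective (K := F) U.subtype U.injective_subtype
  have : {p : Projectivization F V | p.submodule ≤ U}
      = Set.range (Projectivization.map U.subtype U.injective_subtype) := by
    ext p
    induction p using Projectivization.ind with | h v hv =>
    simp only [Set.mem_ofPred_eq, Projectivization.submodule_mk, Set.mem_range,
      Submodule.span_singleton_le_iff_mem]
    constructor
    · intro hU
      refine ⟨Projectivization.mk F ⟨v, hU⟩ (fun h => hv (congrArg Subtype.val h)), ?_⟩
      rfl
    · rintro ⟨p, hp⟩
      induction p using Projectivization.ind with | h w hw =>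
      rw [Projectivization.map_mk, Projectivization.mk_eq_mk_iff'] at hp
      obtain ⟨a, ha⟩ := hp
      by_cases ha0 : a = 0
      · subst ha0
        exfalso
        apply hw
        simpa [eq_comm] using ha
      · have : v = a⁻¹ • (U.subtype w) := by rw [← ha, smul_smul, inv_mul_cancel₀ ha0, one_smul]
        rw [this]
        exact U.smul_mem _ w.2
  rw [this, ← Nat.card_coe_set_eq, Nat.card_range_of_injective hi]

theorem planes_ncard {F : Type*} [Field F] [Finite F]
    (U : Submodule F (Fin 4 → F)) (n : ℕ) (h : Module.finrank F U + n = 4) :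
    {W : Submodule F (Fin 4 → F) | Module.finrank F W = 3 ∧ U ≤ W}.ncard
      = ∑ i ∈ Finset.range n, Nat.card F ^ i := by
  have h4 : Module.finrank F (Fin 4 → F) = 4 := by simp
  have hU := Subspace.finrank_add_finrank_dualAnnihilator_eq U
  rw [← points_ncard U.dualAnnihilator n (by omega)]
  symm
  refine Set.ncard_congr (fun p _ => p.submodule.dualCoannihilator) ?_ ?_ ?_
  · intro p hp
    have h1 := Subspace.finrank_add_finrank_dualCoannihilator_eq p.submodule
    rw [p.finrank_submodule] at h1
    refine ⟨by omega, ?_⟩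
    exact Submodule.le_dualAnnihilator_iff_le_dualCoannihilator.1 hp
  · intro p p' _ _ hpp
    apply Projectivization.submodule_injective
    have := congrArg Submodule.dualAnnihilator hpp
    simpa only [Subspace.dualCoannihilator_dualAnnihilator_eq] using this
  · rintro W ⟨hW, hUW⟩
    have h1 := Subspace.finrank_add_finrank_dualAnnihilator_eq W
    refine ⟨Projectivization.mk'' W.dualAnnihilator (by omega), ?_, ?_⟩
    · simp only [Set.mem_ofPred_eq, Projectivization.submodule_mk'']
      exact Submodule.dualAnnihilator_anti hUW
    · simp only [Projectivization.submodule_mk'']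
      exact Subspace.dualAnnihilator_dualCoannihilator_eq

/-- Let x ≥ 1 and let (P₀, P₂) satisfy Property(x) in PG(3,q). If ℓ is a line
such that every point of ℓ belongs to P₀ and every plane containing ℓ belongs
to P₂, then (P₀ minus the points of ℓ, P₂ minus the planes containing ℓ)
satisfies Property(x−1). -/
theorem stmt_18 (F : Type*) [Field F] [Fintype F] (q : ℕ) (hq : q = Fintype.card F)
    (x : ℕ) (hx : 1 ≤ x)
    (P0 : Set (Projectivization F (Fin 4 → F)))
    (P2 : Set (Submodule F (Fin 4 → F)))
    (hprop : PropertyX F q x P0 P2)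
    (ℓ : Submodule F (Fin 4 → F)) (hℓ : Module.finrank F ℓ = 2)
    (hpts : ∀ p : Projectivization F (Fin 4 → F), p.submodule ≤ ℓ → p ∈ P0)
    (hpls : ∀ W : Submodule F (Fin 4 → F), Module.finrank F W = 3 → ℓ ≤ W → W ∈ P2) :
    PropertyX F q (x - 1)
      (P0 \ {p : Projectivization F (Fin 4 → F) | p.submodule ≤ ℓ})
      (P2 \ {W : Submodule F (Fin 4 → F) | ℓ ≤ W}) := by
  have hc : Nat.card F = q := by rw [hq, Nat.card_eq_fintype_card]
  have hq0 : 0 < q := by rw [hq]; exact Fintype.card_pos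
  have h4 : Module.finrank F (Fin 4 → F) = 4 := by simp
  obtain ⟨h1, h2, h3, h5⟩ := hprop
  have hfin0 : Finite (Projectivization F (Fin 4 → F)) := inferInstance
  have hfin2 : Finite (Submodule F (Fin 4 → F)) := inferInstance
  -- point counts
  have hA : ∀ W : Submodule F (Fin 4 → F), Module.finrank F W = 3 →
      {p ∈ P0 \ {p : Projectivization F (Fin 4 → F) | p.submodule ≤ ℓ} | p.submodule ≤ W}.ncard
        + (if ℓ ≤ W then q + 1 else 1) = {p ∈ P0 | p.submodule ≤ W}.ncard := by
    intro W hW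
    have hset : {p ∈ P0 \ {p : Projectivization F (Fin 4 → F) | p.submodule ≤ ℓ} |
        p.submodule ≤ W} = {p ∈ P0 | p.submodule ≤ W} \
          {p : Projectivization F (Fin 4 → F) | p.submodule ≤ W ⊓ ℓ} := by
      ext p
      simp only [Set.mem_sdiff, Set.mem_ofPred_eq, le_inf_iff]
      tauto
    have hsub : {p : Projectivization F (Fin 4 → F) | p.submodule ≤ W ⊓ ℓ} ⊆
        {p ∈ P0 | p.submodule ≤ W} := fun p hp =>
      ⟨hpts p (le_trans hp inf_le_right), le_trans hp inf_le_left⟩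
    rw [hset, ← Set.ncard_sdiff_add_ncard_of_subset hsub]
    congr 1
    split_ifs with hl
    · rw [inf_eq_right.2 hl, points_ncard ℓ 2 hℓ]
      simp [Finset.sum_range_succ, hq, add_comm]
    · have e1 := Submodule.finrank_sup_add_finrank_inf_eq W ℓ
      have e2 := Submodule.finrank_le (W ⊔ ℓ)
      have e3 : Module.finrank F W < Module.finrank F ↥(W ⊔ ℓ) :=
        Submodule.finrank_lt_finrank_of_lt (left_lt_sup.2 hl)
      rw [points_ncard (W ⊓ ℓ) 1 (by omega)]
      simp
  -- plane counts
  have hB : ∀ p : Projectivization F (Fin 4 → F),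
      {W ∈ P2 \ {W : Submodule F (Fin 4 → F) | ℓ ≤ W} | p.submodule ≤ W}.ncard
        + (if p.submodule ≤ ℓ then q + 1 else 1) = {W ∈ P2 | p.submodule ≤ W}.ncard := by
    intro p
    have hset : {W ∈ P2 \ {W : Submodule F (Fin 4 → F) | ℓ ≤ W} | p.submodule ≤ W}
        = {W ∈ P2 | p.submodule ≤ W} \
          {W : Submodule F (Fin 4 → F) | Module.finrank F W = 3 ∧ ℓ ⊔ p.submodule ≤ W} := by
      ext W
      have := h2 W
      simp only [Set.mem_sdiff, Set.mem_ofPred_eq, sup_le_iff]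
      tauto
    have hsub : {W : Submodule F (Fin 4 → F) | Module.finrank F W = 3 ∧ ℓ ⊔ p.submodule ≤ W} ⊆
        {W ∈ P2 | p.submodule ≤ W} := fun W hW =>
      ⟨hpls W hW.1 (le_trans le_sup_left hW.2), le_trans le_sup_right hW.2⟩
    rw [hset, ← Set.ncard_sdiff_add_ncard_of_subset hsub]
    congr 1
    split_ifs with hl
    · rw [sup_eq_left.2 hl, planes_ncard ℓ 2 (by omega)]
      simp [Finset.sum_range_succ, hq, add_comm]
    · have e1 := Submodule.finrank_sup_add_finrank_inf_eq ℓ p.submodule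
      have e3 : Module.finrank F ℓ < Module.finrank F ↥(ℓ ⊔ p.submodule) :=
        Submodule.finrank_lt_finrank_of_lt (left_lt_sup.2 hl)
      rw [p.finrank_submodule] at e1
      rw [planes_ncard (ℓ ⊔ p.submodule) 1 (by omega)]
      simp
  refine ⟨?_, ?_, ?_, ?_⟩
  · intro W hW
    have a := hA W hW
    have b := h1 W hW
    have c := h2 W
    split_ifs at a with hl
    · have := (c.1 (hpls W hW hl)).2
      omega
    · omega
  · intro W
    have c := h2 W
    simp only [Set.mem_sdiff, Set.mem_ofPred_eq]
    by_cases hW : Module.finrank F W = 3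
    · have a := hA W hW
      simp only [Set.mem_sdiff, Set.mem_ofPred_eq] at a
      split_ifs at a with hl
      · have := (c.1 (hpls W hW hl)).2
        simp only [hl, not_true_eq_false, and_false, false_iff, hW, true_and]
        omega
      · simp only [hl, not_false_eq_true, and_true, c, hW, true_and]
        omega
    · simp [c, hW]
  · intro p
    have a := hB p
    have b := h3 p
    split_ifs at a with hl
    · have := (h5 p).1 (hpts p hl)
      omega
    · omega
  · intro p
    have c := h5 p
    have a := hB p
    simp only [Set.mem_sdiff, Set.mem_ofPred_eq] at a ⊢
    split_ifs at a with hl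
    · have := c.1 (hpts p hl)
      simp only [hl, not_true_eq_false, and_false, false_iff]
      omega
    · simp only [hl, not_false_eq_true, and_true, c]
      omega
end

section
/- Let x ≥ 1 be a natural number with (x−1)² < q (equivalently, x < √q + 1), and let (P₀, P₂) satisfy Property(x) in PG(3,q). Then there exist x pairwise disjoint lines ℓ₁, …, ℓ_x of PG(3,q) such that P₀ is exactly the set of points lying on at least one of the lines ℓᵢ and P₂ is exactly the set of planes containing at least one of the lines ℓᵢ. (Under the Klein correspondence this says: every Cameron–Liebler set of generators of the Klein quadric Q⁺(5,q) with parameter x < √q + 1 is the union of x point-pencils whose vertices are pairwise non-collinear.) -/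
open scoped Classical

namespace CLPencil

open Module Finset

variable {F : Type*} [Field F] [Fintype F]

noncomputable instance instFintypeSub : Fintype (Submodule F (Fin 4 → F)) := Fintype.ofFinite _

/-- Subspaces of dimension `k` between `A` and `B`. -/
noncomputable def btw (A B : Submodule F (Fin 4 → F)) (k : ℕ) :
    Finset (Submodule F (Fin 4 → F)) :=
  univ.filter (fun C => A ≤ C ∧ C ≤ B ∧ finrank F C = k)

lemma mem_btw {A B C : Submodule F (Fin 4 → F)} {k : ℕ} :
    C ∈ btw A B k ↔ A ≤ C ∧ C ≤ B ∧ finrank F C = k := by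
  simp [btw]

lemma btw_filter_ge (A B r : Submodule F (Fin 4 → F)) (k : ℕ) :
    (btw A B k).filter (fun C => r ≤ C) = btw (A ⊔ r) B k := by
  ext C; simp only [mem_filter, mem_btw, sup_le_iff]; tauto

lemma btw_filter_le (A B r : Submodule F (Fin 4 → F)) (k : ℕ) :
    (btw A B k).filter (fun C => C ≤ r) = btw A (B ⊓ r) k := by
  ext C; simp only [mem_filter, mem_btw, le_inf_iff]; tauto

lemma card_btw_left {A B : Submodule F (Fin 4 → F)} {k : ℕ} (h : A ≤ B) (hA : finrank F A = k) :
    (btw A B k).card = 1 := by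
  rw [card_eq_one]
  refine ⟨A, ?_⟩
  ext C
  simp only [mem_btw, mem_singleton]
  constructor
  · rintro ⟨h1, h2, h3⟩
    exact (Submodule.eq_of_le_of_finrank_eq h1 (by omega)).symm
  · rintro rfl; exact ⟨le_rfl, h, hA⟩

lemma card_btw_right {A B : Submodule F (Fin 4 → F)} {k : ℕ} (h : A ≤ B) (hB : finrank F B = k) :
    (btw A B k).card = 1 := by
  rw [card_eq_one]
  refine ⟨B, ?_⟩
  ext C
  simp only [mem_btw, mem_singleton]
  constructor
  · rintro ⟨h1, h2, h3⟩
    exact (Submodule.eq_of_le_of_finrank_eq h2 (by omega))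
  · rintro rfl; exact ⟨h, le_rfl, hB⟩

lemma card_btw_two {A B : Submodule F (Fin 4 → F)} {k : ℕ} (h : A ≤ B)
    (hk : finrank F A + 1 = k) (hB : finrank F B = k + 1) :
    (btw A B k).card = Fintype.card F + 1 := by
  obtain ⟨D, hD1, hD2⟩ : ∃ D : Submodule F (Fin 4 → F), A ⊓ D = ⊥ ∧ A ⊔ D = B := by
    obtain ⟨E, hE⟩ := exists_isCompl A
    refine ⟨E ⊓ B, ?_, ?_⟩
    · rw [← inf_assoc, hE.inf_eq_bot, bot_inf_eq]
    · rw [← sup_inf_assoc_of_le E h, hE.sup_eq_top, top_inf_eq]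
  have hDr : finrank F D = 2 := by
    have := Submodule.finrank_sup_add_finrank_inf_eq A D
    rw [hD1, hD2, finrank_bot] at this
    omega
  let f : Projectivization F D → Submodule F (Fin 4 → F) :=
    fun p => A ⊔ p.submodule.map D.subtype
  have hle : ∀ p : Projectivization F D, p.submodule.map D.subtype ≤ D := fun p =>
    Submodule.map_subtype_le D p.submodule
  have hfD : ∀ p : Projectivization F D, f p ⊓ D = p.submodule.map D.subtype := by
    intro p
    have := sup_inf_assoc_of_le A (hle p)
    simp only [f]
    rw [sup_comm, this, hD1, sup_bot_eq]
  have hinj : Function.Injective f := by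
    intro p r hpr
    have h1 : p.submodule.map D.subtype = r.submodule.map D.subtype := by
      rw [← hfD, ← hfD, hpr]
    exact Projectivization.submodule_injective
      (Submodule.map_injective_of_injective D.injective_subtype h1)
  have hrange : Set.range f = (btw A B k : Set (Submodule F (Fin 4 → F))) := by
    ext C
    simp only [Set.mem_range, mem_coe, mem_btw]
    constructor
    · rintro ⟨p, rfl⟩
      refine ⟨le_sup_left, sup_le h ((hle p).trans (hD2 ▸ le_sup_right)), ?_⟩
      have h1 := Submodule.finrank_sup_add_finrank_inf_eq A (p.submodule.map D.subtype)
      have h2 : A ⊓ p.submodule.map D.subtype = ⊥ :=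
        le_bot_iff.1 ((inf_le_inf_left A (hle p)).trans hD1.le)
      have h3 : finrank F (p.submodule.map D.subtype) = 1 := by
        rw [← (Submodule.equivMapOfInjective D.subtype D.injective_subtype _).finrank_eq]
        exact p.finrank_submodule
      rw [h2, finrank_bot, h3] at h1
      simp only [f]
      omega
    · rintro ⟨h1, h2, h3⟩
      have h4 : A ⊔ (C ⊓ D) = C := by
        rw [inf_comm, ← sup_inf_assoc_of_le D h1, hD2, inf_eq_right.2 h2]
      have h5 : finrank F (C ⊓ D : Submodule F (Fin 4 → F)) = 1 := by
        have := Submodule.finrank_sup_add_finrank_inf_eq A (C ⊓ D)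
        have h6 : A ⊓ (C ⊓ D) = ⊥ := le_bot_iff.1
          ((inf_le_inf_left A inf_le_right).trans hD1.le)
        rw [h4, h6, finrank_bot] at this
        omega
      have h7 : (Submodule.comap D.subtype (C ⊓ D)).map D.subtype = C ⊓ D := by
        rw [Submodule.map_comap_subtype]; simp
      have h8 : finrank F (Submodule.comap D.subtype (C ⊓ D)) = 1 := by
        rw [(Submodule.equivMapOfInjective D.subtype D.injective_subtype _).finrank_eq, h7, h5]
      refine ⟨Projectivization.mk'' _ h8, ?_⟩
      simp only [f, Projectivization.submodule_mk'']
      rw [h7, h4]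
  rw [← Set.ncard_coe_finset, ← hrange, Set.ncard_range_of_injective hinj, Projectivization.card_of_finrank_two F D hDr,
    Nat.card_eq_fintype_card]

lemma dcount {α β : Type*} (s : Finset α) (t : Finset β) (r : α → β → Prop) :
    ∑ a ∈ s, (t.filter (fun b => r a b)).card = ∑ b ∈ t, (s.filter (fun a => r a b)).card :=
  Finset.sum_card_bipartiteAbove_eq_sum_card_bipartiteBelow r

/-- dimension helpers -/
lemma finrank_sup_pt {A p : Submodule F (Fin 4 → F)} (hp : finrank F p = 1) (h : ¬ p ≤ A) :
    finrank F (A ⊔ p : Submodule F (Fin 4 → F)) = finrank F A + 1 := by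
  have h1 := Submodule.finrank_sup_add_finrank_inf_eq A p
  have h2 : finrank F (A ⊓ p : Submodule F (Fin 4 → F)) < finrank F p :=
    Submodule.finrank_lt_finrank_of_lt (lt_of_le_of_ne inf_le_right (fun h' => h (inf_eq_right.1 h')))
  omega

/-- intersection with a hyperplane `W` of `B` -/
lemma finrank_inf_hyper {A B W : Submodule F (Fin 4 → F)} (hA : A ≤ B) (hW : W ≤ B)
    (hr : finrank F B = finrank F W + 1) (h : ¬ A ≤ W) :
    finrank F (A ⊓ W : Submodule F (Fin 4 → F)) + 1 = finrank F A := by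
  have h1 := Submodule.finrank_sup_add_finrank_inf_eq A W
  have h2 : finrank F W < finrank F (A ⊔ W : Submodule F (Fin 4 → F)) :=
    Submodule.finrank_lt_finrank_of_lt (lt_of_le_of_ne le_sup_right (fun h' => h (sup_eq_right.1 h'.symm)))
  have h3 : finrank F (A ⊔ W : Submodule F (Fin 4 → F)) ≤ finrank F B :=
    Submodule.finrank_mono (sup_le hA hW)
  omega

lemma pt_le_pt {p r : Submodule F (Fin 4 → F)} (hp : finrank F p = 1) (hr : finrank F r = 1)
    (h : p ≤ r) : p = r := Submodule.eq_of_le_of_finrank_eq h (by omega)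

/-- The property, in terms of finite sets of subspaces. -/
structure Prp (x : ℕ) (P Q : Finset (Submodule F (Fin 4 → F))) : Prop where
  plane : ∀ W : Submodule F (Fin 4 → F), finrank F W = 3 →
    (P.filter (fun p => p ≤ W)).card = x + (if W ∈ Q then Fintype.card F else 0)
  point : ∀ p : Submodule F (Fin 4 → F), finrank F p = 1 →
    (Q.filter (fun W => p ≤ W)).card = x + (if p ∈ P then Fintype.card F else 0)
  pt : ∀ p ∈ P, finrank F p = 1
  pl : ∀ W ∈ Q, finrank F W = 3

variable {x : ℕ} {P Q : Finset (Submodule F (Fin 4 → F))}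

lemma c1 (h : Prp x P Q) {l : Submodule F (Fin 4 → F)} (hl : finrank F l = 2) :
    P.card + Fintype.card F * (P.filter (fun p => p ≤ l)).card =
      x * (Fintype.card F + 1) + Fintype.card F * (Q.filter (fun W => l ≤ W)).card := by
  have htop : finrank F (⊤ : Submodule F (Fin 4 → F)) = 4 := by simp
  have hd := dcount (btw l ⊤ 3) P (fun W p => p ≤ W)
  have hL : ∑ W ∈ btw l ⊤ 3, (P.filter (fun p => p ≤ W)).card =
      x * (Fintype.card F + 1) + Fintype.card F * (Q.filter (fun W => l ≤ W)).card := by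
    rw [sum_congr rfl (fun W hW => h.plane W (mem_btw.1 hW).2.2), sum_add_distrib, sum_const,
      card_btw_two le_top (by omega) (by omega), ← sum_filter, sum_const]
    have : (btw l ⊤ 3).filter (fun W => W ∈ Q) = Q.filter (fun W => l ≤ W) := by
      ext W; simp only [mem_filter, mem_btw]
      constructor
      · rintro ⟨⟨h1, _⟩, h2⟩; exact ⟨h2, h1⟩
      · rintro ⟨h1, h2⟩; exact ⟨⟨h2, le_top, h.pl W h1⟩, h1⟩
    rw [this]; simp; ring
  have hR : ∑ p ∈ P, ((btw l ⊤ 3).filter (fun W => p ≤ W)).card =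
      P.card + Fintype.card F * (P.filter (fun p => p ≤ l)).card := by
    have : ∀ p ∈ P, ((btw l ⊤ 3).filter (fun W => p ≤ W)).card =
        1 + if p ≤ l then Fintype.card F else 0 := by
      intro p hp
      rw [btw_filter_ge]
      split_ifs with hpl
      · rw [sup_eq_left.2 hpl, card_btw_two le_top (by omega) (by omega), add_comm]
      · rw [card_btw_left le_top]
        rw [finrank_sup_pt (h.pt p hp) hpl, hl]
    rw [sum_congr rfl this, sum_add_distrib, ← sum_filter]
    simp; ring
  rw [← hR, ← hL, hd]

lemma c2m (h : Prp x P Q) {p W : Submodule F (Fin 4 → F)} (hp : finrank F p = 1)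
    (hW : W ∈ Q) (hpW : p ≤ W) :
    ∑ l ∈ btw p W 2, (P.filter (fun r => r ≤ l)).card =
      Fintype.card F + x + if p ∈ P then Fintype.card F else 0 := by
  have hW3 := h.pl W hW
  have h1 : ∀ l ∈ btw p W 2, (P.filter (fun r => r ≤ l)).card =
      ((P.filter (fun r => r ≤ W)).filter (fun r => r ≤ l)).card := by
    intro l hl
    rw [filter_filter]
    congr 1
    ext r
    simp only [mem_filter]
    have := (mem_btw.1 hl).2.1
    exact ⟨fun a => ⟨a.1, a.2.trans this, a.2⟩, fun a => ⟨a.1, a.2.2⟩⟩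
  rw [sum_congr rfl h1, dcount]
  have h2 : ∀ r ∈ P.filter (fun r => r ≤ W), ((btw p W 2).filter (fun l => r ≤ l)).card =
      1 + if r = p then Fintype.card F else 0 := by
    intro r hr
    rw [mem_filter] at hr
    have hr1 := h.pt r hr.1
    rw [btw_filter_ge]
    split_ifs with hrp
    · rw [hrp, sup_idem, card_btw_two hpW (by omega) (by omega), add_comm]
    · rw [card_btw_left (sup_le hpW hr.2)]
      rw [finrank_sup_pt hr1 (fun h' => hrp (pt_le_pt hr1 hp h')), hp]
  rw [sum_congr rfl h2, sum_add_distrib, sum_const, h.plane W hW3, sum_ite_eq']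
  simp [hW, hpW]
  ring

lemma c2k (h : Prp x P Q) {p W : Submodule F (Fin 4 → F)} (hp : finrank F p = 1)
    (hW : W ∈ Q) (hpW : p ≤ W) :
    ∑ l ∈ btw p W 2, (Q.filter (fun U => l ≤ U)).card =
      Fintype.card F + x + if p ∈ P then Fintype.card F else 0 := by
  have htop : finrank F (⊤ : Submodule F (Fin 4 → F)) = 4 := by simp
  have hW3 := h.pl W hW
  have h1 : ∀ l ∈ btw p W 2, (Q.filter (fun U => l ≤ U)).card =
      ((Q.filter (fun U => p ≤ U)).filter (fun U => l ≤ U)).card := by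
    intro l hl
    rw [filter_filter]
    congr 1
    ext r
    simp only [mem_filter]
    have := (mem_btw.1 hl).1
    exact ⟨fun a => ⟨a.1, this.trans a.2, a.2⟩, fun a => ⟨a.1, a.2.2⟩⟩
  rw [sum_congr rfl h1, dcount]
  have h2 : ∀ U ∈ Q.filter (fun U => p ≤ U), ((btw p W 2).filter (fun l => l ≤ U)).card =
      1 + if U = W then Fintype.card F else 0 := by
    intro U hU
    rw [mem_filter] at hU
    have hU3 := h.pl U hU.1
    rw [btw_filter_le]
    split_ifs with hUW
    · rw [hUW, inf_idem, card_btw_two hpW (by omega) (by omega), add_comm]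
    · rw [card_btw_right (le_inf hpW hU.2)]
      have := finrank_inf_hyper (A := W) (B := ⊤) (W := U) le_top le_top (by omega)
        (fun h' => hUW (Submodule.eq_of_le_of_finrank_eq h' (by omega)).symm)
      omega
  rw [sum_congr rfl h2, sum_add_distrib, sum_const, h.point p hp, sum_ite_eq']
  simp [hW, hpW]
  ring

lemma exists_pt (h : Prp x P Q) {W : Submodule F (Fin 4 → F)} (hW : W ∈ Q) :
    ∃ p : Submodule F (Fin 4 → F), p ≤ W ∧ finrank F p = 1 := by
  have hq : 0 < Fintype.card F := Fintype.card_pos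
  have : (P.filter (fun p => p ≤ W)).card ≠ 0 := by
    rw [h.plane W (h.pl W hW), if_pos hW]; omega
  obtain ⟨p, hp⟩ := card_ne_zero.1 this
  rw [mem_filter] at hp
  exact ⟨p, hp.2, h.pt p hp.1⟩

lemma card_P (h : Prp x P Q) (hQ : Q.Nonempty) : P.card = x * (Fintype.card F + 1) := by
  obtain ⟨W, hW⟩ := hQ
  have hW3 := h.pl W hW
  have hq : 0 < Fintype.card F := Fintype.card_pos
  obtain ⟨p, hpW, hp⟩ := exists_pt h hW
  have e1 := c2m h hp hW hpW
  have e2 := c2k h hp hW hpW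
  have e3 : ∑ l ∈ btw p W 2, (P.card + Fintype.card F * (P.filter (fun p => p ≤ l)).card) =
      ∑ l ∈ btw p W 2,
      (x * (Fintype.card F + 1) + Fintype.card F * (Q.filter (fun W => l ≤ W)).card) :=
    sum_congr rfl (fun l hl => c1 h (mem_btw.1 hl).2.2)
  simp only [sum_add_distrib, ← mul_sum _ _ (Fintype.card F), e1, e2] at e3
  simp only [sum_const, card_btw_two hpW (by omega : finrank F p + 1 = 2) (by omega),
    smul_eq_mul] at e3
  have := Nat.add_right_cancel e3
  exact Nat.eq_of_mul_eq_mul_left (Nat.succ_pos _) this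

lemma c3 (h : Prp x P Q) (hQ : Q.Nonempty) {l : Submodule F (Fin 4 → F)} (hl : finrank F l = 2) :
    (P.filter (fun p => p ≤ l)).card = (Q.filter (fun W => l ≤ W)).card := by
  have hq : 0 < Fintype.card F := Fintype.card_pos
  have e4 := card_P h hQ
  have e5 := c1 h hl
  rw [e4] at e5
  exact Nat.eq_of_mul_eq_mul_left hq (Nat.add_left_cancel e5)

/-- Number of lines in a plane. -/
lemma card_lines {p W : Submodule F (Fin 4 → F)} (hp : finrank F p = 1) (hpW : p ≤ W)
    (hW : finrank F W = 3) :
    (btw ⊥ W 2).card = Fintype.card F ^ 2 + Fintype.card F + 1 := by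
  obtain ⟨l0, hl0, hl0r⟩ : ∃ l : Submodule F (Fin 4 → F), l ≤ W ∧ finrank F l = 2 := by
    have hc := card_btw_two hpW (by omega : finrank F p + 1 = 2) (by omega)
    obtain ⟨l, hl⟩ := card_ne_zero.1 (by omega : (btw p W 2).card ≠ 0)
    exact ⟨l, (mem_btw.1 hl).2⟩
  have hd := dcount (btw ⊥ l0 1) (btw ⊥ W 2) (fun p l => p ≤ l)
  have hbot : finrank F (⊥ : Submodule F (Fin 4 → F)) = 0 := by simp
  have hL : ∀ p ∈ btw ⊥ l0 1, ((btw ⊥ W 2).filter (fun l => p ≤ l)).card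
      = Fintype.card F + 1 := by
    intro p hp
    obtain ⟨-, h1, h2⟩ := mem_btw.1 hp
    rw [btw_filter_ge, bot_sup_eq, card_btw_two (h1.trans hl0) (by omega) (by omega)]
  have hR : ∀ l ∈ btw ⊥ W 2, ((btw ⊥ l0 1).filter (fun p => p ≤ l)).card
      = 1 + if l = l0 then Fintype.card F else 0 := by
    intro l hl
    obtain ⟨-, h1, h2⟩ := mem_btw.1 hl
    rw [btw_filter_le]
    split_ifs with he
    · rw [he, inf_idem, card_btw_two bot_le (by omega) (by omega), add_comm]
    · rw [card_btw_right bot_le]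
      have := finrank_inf_hyper (A := l0) (B := W) (W := l) hl0 h1 (by omega)
        (fun h' => he (Submodule.eq_of_le_of_finrank_eq h' (by omega)).symm)
      omega
  rw [sum_congr rfl hL, sum_congr rfl hR, sum_const, sum_add_distrib, sum_ite_eq',
    card_btw_two bot_le (by omega) (by omega), if_pos (mem_btw.2 ⟨bot_le, hl0, hl0r⟩)] at hd
  simp at hd
  nlinarith

/-- A line all whose points lie in `P`. -/
lemma exists_line (h : Prp x P Q) (hx : 1 ≤ x) (hxq : (x - 1) ^ 2 < Fintype.card F)
    (hQ : Q.Nonempty) :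
    ∃ l : Submodule F (Fin 4 → F), finrank F l = 2 ∧
      ∀ p : Submodule F (Fin 4 → F), finrank F p = 1 → p ≤ l → p ∈ P := by
  by_contra! hcon
  have hQ' := hQ
  obtain ⟨W, hW⟩ := hQ
  have hW3 := h.pl W hW
  set q := Fintype.card F with hqdef
  let m : Submodule F (Fin 4 → F) → ℕ := fun l => (P.filter (fun r => r ≤ l)).card
  have hm1 : ∀ l ∈ btw ⊥ W 2, 1 ≤ m l := by
    intro l hl
    obtain ⟨-, h1, h2⟩ := mem_btw.1 hl
    simp only [m]
    rw [c3 h hQ' h2, Nat.one_le_iff_ne_zero, card_ne_zero]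
    exact ⟨W, mem_filter.2 ⟨hW, h1⟩⟩
  have hmx : ∀ l ∈ btw ⊥ W 2, m l ≤ x := by
    intro l hl
    obtain ⟨-, h1, h2⟩ := mem_btw.1 hl
    obtain ⟨p, hp, hpl, hpP⟩ := hcon l h2
    have e := c2m h hp hW (hpl.trans h1)
    rw [if_neg hpP] at e
    have hlm : l ∈ btw p W 2 := mem_btw.2 ⟨hpl, h1, h2⟩
    rw [← add_sum_erase _ _ hlm] at e
    have e2 : (btw p W 2).card - 1 ≤ ∑ l ∈ (btw p W 2).erase l, m l := by
      rw [← card_erase_of_mem hlm, card_eq_sum_ones]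
      refine sum_le_sum fun l' hl' => hm1 l' ?_
      obtain ⟨_, h3, h4⟩ := mem_btw.1 (mem_of_mem_erase hl')
      exact mem_btw.2 ⟨bot_le, h3, h4⟩
    rw [card_btw_two (hpl.trans h1) (by omega) (by omega)] at e2
    simp only [m] at e2 ⊢
    omega
  have hS : (P.filter (fun p => p ≤ W)).card = x + q := by
    rw [h.plane W hW3, if_pos hW]
  have hml : ∀ l ∈ btw ⊥ W 2, (P.filter (fun r => r ≤ l)) =
      ((P.filter (fun r => r ≤ W)).filter (fun r => r ≤ l)) := by
    intro l hl
    rw [filter_filter]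
    ext r
    simp only [mem_filter]
    have := (mem_btw.1 hl).2.1
    exact ⟨fun a => ⟨a.1, a.2.trans this, a.2⟩, fun a => ⟨a.1, a.2.2⟩⟩
  obtain ⟨p0, hp0W, hp0⟩ := exists_pt h hW
  have s0 := card_lines hp0 hp0W hW3
  have s1 : ∑ l ∈ btw ⊥ W 2, m l = (x + q) * (q + 1) := by
    have e1 : ∀ l ∈ btw ⊥ W 2, m l =
        ((P.filter (fun r => r ≤ W)).filter (fun r => r ≤ l)).card := by
      intro l hl
      simp only [m]
      rw [hml l hl]
    rw [sum_congr rfl e1, dcount]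
    have e2 : ∀ r ∈ P.filter (fun r => r ≤ W),
        ((btw ⊥ W 2).filter (fun l => r ≤ l)).card = q + 1 := by
      intro r hr
      rw [mem_filter] at hr
      have := h.pt r hr.1
      rw [btw_filter_ge, bot_sup_eq, card_btw_two hr.2 (by omega) (by omega)]
    rw [sum_congr rfl e2, sum_const, hS, smul_eq_mul]
  have s2 : ∑ l ∈ btw ⊥ W 2, m l * m l = (x + q) * (q + x + q) := by
    have e1 : ∀ l ∈ btw ⊥ W 2, m l * m l =
        ∑ r ∈ P.filter (fun r => r ≤ W), if r ≤ l then m l else 0 := by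
      intro l hl
      rw [← sum_filter, ← hml l hl, sum_const, smul_eq_mul]
    rw [sum_congr rfl e1, sum_comm]
    have e2 : ∀ r ∈ P.filter (fun r => r ≤ W),
        ∑ l ∈ btw ⊥ W 2, (if r ≤ l then m l else 0) = q + x + q := by
      intro r hr
      rw [mem_filter] at hr
      rw [← sum_filter, btw_filter_ge, bot_sup_eq]
      have := c2m h (h.pt r hr.1) hW hr.2
      rw [if_pos hr.1] at this
      exact this
    rw [sum_congr rfl e2, sum_const, hS, smul_eq_mul]
  have s3 : ∑ l ∈ btw ⊥ W 2, (((m l : ℤ) - 1) * ((m l : ℤ) - x)) ≤ 0 := by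
    refine sum_nonpos fun l hl => ?_
    have a1 := hm1 l hl
    have a2 := hmx l hl
    exact mul_nonpos_of_nonneg_of_nonpos (by omega) (by omega)
  have s4 : ∑ l ∈ btw ⊥ W 2, (((m l : ℤ) - 1) * ((m l : ℤ) - x)) =
      (∑ l ∈ btw ⊥ W 2, m l * m l : ℕ) - (x + 1) * (∑ l ∈ btw ⊥ W 2, m l : ℕ)
        + x * ((btw ⊥ W 2).card : ℤ) := by
    push_cast
    rw [mul_sum, ← sum_sub_distrib, mul_comm (x : ℤ), ← nsmul_eq_mul, ← sum_const,
      ← sum_add_distrib]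
    exact sum_congr rfl fun l _ => by ring
  rw [s4, s0, s1, s2] at s3
  obtain ⟨y, rfl⟩ : ∃ y, x = y + 1 := ⟨x - 1, by omega⟩
  simp only [Nat.add_sub_cancel] at hxq
  have hq0 : (0 : ℤ) < q := by
    have : 0 < q := Fintype.card_pos
    exact_mod_cast this
  have hxq' : (y : ℤ) ^ 2 < q := by exact_mod_cast hxq
  rw [← hqdef] at s3
  push_cast at s3
  have : (q : ℤ) * (q - y ^ 2) ≤ 0 := by
    nlinarith
  nlinarith [mul_pos hq0 (sub_pos.2 hxq')]


lemma all_planes (h : Prp x P Q) (hQ : Q.Nonempty) {l : Submodule F (Fin 4 → F)}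
    (hl : finrank F l = 2)
    (hP : ∀ p : Submodule F (Fin 4 → F), finrank F p = 1 → p ≤ l → p ∈ P) :
    ∀ W : Submodule F (Fin 4 → F), finrank F W = 3 → l ≤ W → W ∈ Q := by
  have htop : finrank F (⊤ : Submodule F (Fin 4 → F)) = 4 := by simp
  have hbot : finrank F (⊥ : Submodule F (Fin 4 → F)) = 0 := by simp
  have h1 := c3 h hQ hl
  have h2 : P.filter (fun p => p ≤ l) = btw ⊥ l 1 := by
    ext p; simp only [mem_filter, mem_btw]
    exact ⟨fun a => ⟨bot_le, a.2, h.pt p a.1⟩, fun a => ⟨hP p a.2.2 a.2.1, a.2.1⟩⟩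
  have h3 : Q.filter (fun W => l ≤ W) ⊆ btw l ⊤ 3 := by
    intro W hW
    rw [mem_filter] at hW
    exact mem_btw.2 ⟨hW.2, le_top, h.pl W hW.1⟩
  rw [h2, card_btw_two bot_le (by omega) (by omega)] at h1
  have h4 := eq_of_subset_of_card_le h3
    (by rw [← h1, card_btw_two le_top (by omega) (by omega)])
  intro W hW hlW
  have : W ∈ btw l ⊤ 3 := mem_btw.2 ⟨hlW, le_top, hW⟩
  rw [← h4] at this
  exact (mem_filter.1 this).1

lemma remove {y : ℕ} (h : Prp (y + 1) P Q) {l : Submodule F (Fin 4 → F)}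
    (hl : finrank F l = 2)
    (hP : ∀ p : Submodule F (Fin 4 → F), finrank F p = 1 → p ≤ l → p ∈ P)
    (hQ : ∀ W : Submodule F (Fin 4 → F), finrank F W = 3 → l ≤ W → W ∈ Q) :
    Prp y (P.filter (fun p => ¬ p ≤ l)) (Q.filter (fun W => ¬ l ≤ W)) := by
  have htop : finrank F (⊤ : Submodule F (Fin 4 → F)) = 4 := by simp
  have hbot : finrank F (⊥ : Submodule F (Fin 4 → F)) = 0 := by simp
  refine ⟨?_, ?_, fun p hp => h.pt p (mem_filter.1 hp).1, fun p hp => h.pl p (mem_filter.1 hp).1⟩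
  · intro W hW
    have e1 := h.plane W hW
    rw [← card_filter_add_card_filter_not (s := P.filter (fun p => p ≤ W)) (fun p => p ≤ l)] at e1
    have e2 : (P.filter (fun p => p ≤ W)).filter (fun p => p ≤ l) = btw ⊥ (l ⊓ W) 1 := by
      ext p; simp only [mem_filter, mem_btw, le_inf_iff]
      exact ⟨fun a => ⟨bot_le, ⟨a.2, a.1.2⟩, h.pt p a.1.1⟩,
        fun a => ⟨⟨hP p a.2.2 a.2.1.1, a.2.1.2⟩, a.2.1.1⟩⟩
    rw [e2, filter_comm] at e1
    by_cases hlW : l ≤ W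
    · rw [inf_eq_left.2 hlW, card_btw_two bot_le (by omega) (by omega), if_pos (hQ W hW hlW)] at e1
      rw [if_neg (by simp [hlW])]
      omega
    · have := finrank_inf_hyper (A := l) (B := ⊤) (W := W) le_top le_top (by omega) hlW
      rw [card_btw_right bot_le (by omega)] at e1
      simp only [mem_filter, hlW, not_false_eq_true, and_true]
      omega
  · intro p hp
    have e1 := h.point p hp
    rw [← card_filter_add_card_filter_not (s := Q.filter (fun W => p ≤ W)) (fun W => l ≤ W)] at e1
    have e2 : (Q.filter (fun W => p ≤ W)).filter (fun W => l ≤ W) = btw (l ⊔ p) ⊤ 3 := by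
      ext W; simp only [mem_filter, mem_btw, sup_le_iff]
      exact ⟨fun a => ⟨⟨a.2, a.1.2⟩, le_top, h.pl W a.1.1⟩,
        fun a => ⟨⟨hQ W a.2.2 a.1.1, a.1.2⟩, a.1.1⟩⟩
    rw [e2, filter_comm] at e1
    by_cases hpl : p ≤ l
    · rw [sup_eq_left.2 hpl, card_btw_two le_top (by omega) (by omega), if_pos (hP p hp hpl)] at e1
      rw [if_neg (by simp [hpl])]
      omega
    · have := finrank_sup_pt hp hpl
      rw [card_btw_left le_top (by omega)] at e1
      simp only [mem_filter, hpl, not_false_eq_true, and_true]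
      omega

lemma main : ∀ (x : ℕ) (P Q : Finset (Submodule F (Fin 4 → F))), Prp x P Q →
    (x - 1) ^ 2 < Fintype.card F →
    ∃ ℓ : Fin x → Submodule F (Fin 4 → F),
      (∀ i, finrank F (ℓ i) = 2) ∧
      (∀ i j, i ≠ j → ℓ i ⊓ ℓ j = ⊥) ∧
      (∀ p : Submodule F (Fin 4 → F), finrank F p = 1 → (p ∈ P ↔ ∃ i, p ≤ ℓ i)) ∧
      (∀ W : Submodule F (Fin 4 → F), finrank F W = 3 → (W ∈ Q ↔ ∃ i, ℓ i ≤ W)) := by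
  have hq : 0 < Fintype.card F := Fintype.card_pos
  intro x
  induction x with
  | zero =>
    intro P Q h _
    have hQ : Q = ∅ := by
      by_contra hne
      obtain ⟨W, hW⟩ := nonempty_iff_ne_empty.2 hne
      have e1 := card_P h ⟨W, hW⟩
      have e2 := h.plane W (h.pl W hW)
      have e3 : P = ∅ := by simpa using e1
      rw [e3, if_pos hW] at e2
      simp at e2
      omega
    have hP : P = ∅ := by
      by_contra hne
      obtain ⟨p, hp⟩ := nonempty_iff_ne_empty.2 hne
      have e2 := h.point p (h.pt p hp)
      rw [hQ, if_pos hp] at e2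
      simp at e2
      omega
    exact ⟨fun i => i.elim0, fun i => i.elim0, fun i => i.elim0, by simp [hP], by simp [hQ]⟩
  | succ y ih =>
    intro P Q h hy
    have hQne : Q.Nonempty := by
      by_contra hne
      rw [not_nonempty_iff_eq_empty] at hne
      obtain ⟨v, hv⟩ := exists_ne (0 : Fin 4 → F)
      have := h.point (Submodule.span F {v}) (finrank_span_singleton hv)
      rw [hne, filter_empty, card_empty] at this
      omega
    obtain ⟨l, hl, hlP⟩ := exists_line h (by omega) hy hQne
    have hlQ := all_planes h hQne hl hlP
    obtain ⟨ℓ, r1, r2, r3, r4⟩ := ih _ _ (remove h hl hlP hlQ)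
      (lt_of_le_of_lt (Nat.pow_le_pow_left (by omega) 2) hy)
    have hdis : ∀ i, l ⊓ ℓ i = ⊥ := by
      intro i
      by_contra hne
      obtain ⟨v, hv, hv0⟩ := Submodule.exists_mem_ne_zero_of_ne_bot hne
      have hs : Submodule.span F {v} ≤ l ⊓ ℓ i := by
        rw [Submodule.span_le]; simpa using hv
      have := (r3 _ (finrank_span_singleton hv0)).2 ⟨i, hs.trans inf_le_right⟩
      exact (mem_filter.1 this).2 (hs.trans inf_le_left)
    refine ⟨Fin.cons l ℓ, ?_, ?_, ?_, ?_⟩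
    · intro i
      refine Fin.cases ?_ (fun i => ?_) i
      · exact hl
      · exact r1 i
    · intro i j
      refine Fin.cases ?_ (fun i => ?_) i
      · refine Fin.cases ?_ (fun j => ?_) j
        · intro h; exact absurd rfl h
        · intro _; simpa using hdis j
      · refine Fin.cases ?_ (fun j => ?_) j
        · intro _; rw [inf_comm]; simpa using hdis i
        · intro hij; simpa using r2 i j (fun h' => hij (by rw [h']))
    · intro p hp
      have := r3 p hp
      rw [mem_filter] at this
      simp only [Fin.exists_fin_succ, Fin.cons_zero, Fin.cons_succ]
      rw [← this]
      have := hlP p hp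
      tauto
    · intro W hW
      have := r4 W hW
      rw [mem_filter] at this
      simp only [Fin.exists_fin_succ, Fin.cons_zero, Fin.cons_succ]
      rw [← this]
      have := hlQ W hW
      tauto

end CLPencil

/-- Let x ≥ 1 with (x−1)² < q, and let (P₀, P₂) satisfy Property(x) in PG(3,q).
Then there exist x pairwise disjoint lines ℓ₁, …, ℓ_x of PG(3,q) such that P₀
is exactly the set of points lying on at least one of the lines and P₂ is
exactly the set of planes containing at least one of the lines. (Under the
Klein correspondence: every Cameron–Liebler set of generators of the Klein
quadric Q⁺(5,q) with parameter x < √q + 1 is a union of x point-pencils with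
pairwise non-collinear vertices.) -/
theorem stmt_19 (F : Type*) [Field F] [Fintype F] (q : ℕ) (hq : q = Fintype.card F)
    (x : ℕ) (hx : 1 ≤ x) (hxq : (x - 1) ^ 2 < q)
    (P0 : Set (Projectivization F (Fin 4 → F)))
    (P2 : Set (Submodule F (Fin 4 → F)))
    (hprop : PropertyX F q x P0 P2) :
    ∃ ℓ : Fin x → Submodule F (Fin 4 → F),
      (∀ i, Module.finrank F (ℓ i) = 2) ∧
      (∀ i j, i ≠ j → ℓ i ⊓ ℓ j = ⊥) ∧
      P0 = {p : Projectivization F (Fin 4 → F) | ∃ i, p.submodule ≤ ℓ i} ∧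
      P2 = {W : Submodule F (Fin 4 → F) | Module.finrank F W = 3 ∧ ∃ i, ℓ i ≤ W} := by
  subst hq
  obtain ⟨h1, h2, h3, h4⟩ := hprop
  have hq : 0 < Fintype.card F := Fintype.card_pos
  let P : Finset (Submodule F (Fin 4 → F)) :=
    Finset.univ.filter (fun H => ∃ p ∈ P0, p.submodule = H)
  let Q : Finset (Submodule F (Fin 4 → F)) := Finset.univ.filter (fun W => W ∈ P2)
  have memP : ∀ p : Projectivization F (Fin 4 → F), p.submodule ∈ P ↔ p ∈ P0 := by
    intro p
    simp only [P, Finset.mem_filter, Finset.mem_univ, true_and]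
    exact ⟨fun ⟨r, hr, e⟩ => Projectivization.submodule_injective e ▸ hr, fun h => ⟨p, h, rfl⟩⟩
  have memQ : ∀ W, W ∈ Q ↔ W ∈ P2 := by intro W; simp [Q]
  have cP : ∀ W : Submodule F (Fin 4 → F),
      (P.filter (fun p => p ≤ W)).card = {p ∈ P0 | p.submodule ≤ W}.ncard := by
    intro W
    rw [← Set.ncard_image_of_injective _ Projectivization.submodule_injective,
      ← Set.ncard_coe_finset]
    congr 1
    ext H
    simp only [P, Finset.coe_filter, Finset.mem_filter, Finset.mem_univ, true_and,
      Set.mem_setOf_eq, Set.mem_image]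
    constructor
    · rintro ⟨⟨p, hp, rfl⟩, hW⟩
      exact ⟨p, ⟨hp, hW⟩, rfl⟩
    · rintro ⟨p, ⟨hp, hW⟩, rfl⟩
      exact ⟨⟨p, hp, rfl⟩, hW⟩
  have cQ : ∀ p : Submodule F (Fin 4 → F),
      (Q.filter (fun W => p ≤ W)).card = {W ∈ P2 | p ≤ W}.ncard := by
    intro p
    rw [← Set.ncard_coe_finset]
    congr 1
    ext W
    simp [Q]
  have hPrp : CLPencil.Prp x P Q := by
    refine ⟨?_, ?_, ?_, ?_⟩
    · intro W hW
      rw [cP]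
      split_ifs with hQ
      · rw [((h2 W).1 ((memQ W).1 hQ)).2, add_comm]
      · rcases h1 W hW with h | h
        · exact h
        · exact absurd ((memQ W).2 ((h2 W).2 ⟨hW, h⟩)) hQ
    · intro p hp
      obtain ⟨p, rfl⟩ : ∃ r : Projectivization F (Fin 4 → F), r.submodule = p :=
        ⟨Projectivization.mk'' p hp, Projectivization.submodule_mk'' p hp⟩
      rw [cQ]
      split_ifs with hP
      · rw [(h4 p).1 ((memP p).1 hP), add_comm]
      · rcases h3 p with h | h
        · exact h
        · exact absurd ((memP p).2 ((h4 p).2 h)) hP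
    · intro p hp
      simp only [P, Finset.mem_filter, Finset.mem_univ, true_and] at hp
      obtain ⟨r, _, rfl⟩ := hp
      exact r.finrank_submodule
    · intro W hW
      exact ((h2 W).1 ((memQ W).1 hW)).1
  obtain ⟨ℓ, r1, r2, r3, r4⟩ := CLPencil.main x P Q hPrp hxq
  refine ⟨ℓ, r1, r2, ?_, ?_⟩
  · ext p
    rw [← memP, r3 _ p.finrank_submodule, Set.mem_setOf_eq]
  · ext W
    rw [Set.mem_setOf_eq]
    constructor
    · intro hW
      have hW3 := ((h2 W).1 hW).1
      exact ⟨hW3, (r4 W hW3).1 ((memQ W).2 hW)⟩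
    · rintro ⟨hW3, hi⟩
      exact (memQ W).1 ((r4 W hW3).2 hi)
end
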